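/- Let B be a unital complex algebra, (M, E : M → B) a B-probability space, D ⊆ B a unital subalgebra, and F : B → D a conditional expectation satisfying the faithfulness condition. Let N ⊆ M be a subalgebra containing D. Then N is free from B with amalgamation over D (with respect to F∘E) if and only if {n₁ b₁, n₂ b₂, …, n_{k−1} b_{k−1}, n_k}_E = F( {n₁ F(b₁), n₂ F(b₂), …, n_{k−1} F(b_{k−1}), n_k}_E ) for all k ≥ 1, all n₁, …, n_k ∈ N and all b₁, …, b_{k−1} ∈ B. -/

import Mathlib

open scoped Classical

noncomputable section

namespace OVFree

variable {B M : Type*}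

/-- `P` is a set partition of `{1, …, n}` (modelled on `Fin n`): its blocks are
nonempty and every point lies in exactly one block. -/
def IsPartition {n : ℕ} (P : Finset (Finset (Fin n))) : Prop :=
  (∀ t ∈ P, t.Nonempty) ∧ ∀ i : Fin n, ∃! t, t ∈ P ∧ i ∈ t

/-- A set partition is non-crossing if there are no `a < b < c < d` with `a, c` in one
block and `b, d` in a different block. -/
def IsNonCrossing {n : ℕ} (P : Finset (Finset (Fin n))) : Prop :=
  ∀ a b c d : Fin n, a < b → b < c → c < d →
    ∀ t ∈ P, ∀ u ∈ P, a ∈ t → c ∈ t → b ∈ u → d ∈ u → t = u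

/-- `NC n`: the (finite) set of non-crossing partitions of `{1, …, n}`. -/
def NC (n : ℕ) : Finset (Finset (Finset (Fin n))) :=
  Finset.univ.filter fun P => IsPartition P ∧ IsNonCrossing P

/-- `i` is the least element of its block of `P`. -/
def IsBlockMin {n : ℕ} (P : Finset (Finset (Fin n))) (i : Fin n) : Prop :=
  ∀ t ∈ P, i ∈ t → ∀ j ∈ t, i ≤ j

/-- `i` is the greatest element of its block of `P`. -/
def IsBlockMax {n : ℕ} (P : Finset (Finset (Fin n))) (i : Fin n) : Prop :=
  ∀ t ∈ P, i ∈ t → ∀ j ∈ t, j ≤ i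

section Brack

variable [Ring B] [Algebra ℂ B] [Ring M] [Algebra ℂ M]

/-- A multiplicative map `⟨⋯⟩ : ⋃ₙ Mⁿ → B` (tuples are encoded as lists): a sequence of
`ℂ`-multilinear maps which is `B`-balanced in the sense of Speicher.  Here `ι : B →ₐ[ℂ] M`
is the inclusion of `B` as a unital subalgebra of `M`. -/
structure MultiplicativeMap (ι : B →ₐ[ℂ] M) where
  toFun : List M → B
  map_add : ∀ (pre : List M) (x y : M) (post : List M),
    toFun (pre ++ (x + y) :: post) = toFun (pre ++ x :: post) + toFun (pre ++ y :: post)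
  map_smul : ∀ (pre : List M) (c : ℂ) (x : M) (post : List M),
    toFun (pre ++ (c • x) :: post) = c • toFun (pre ++ x :: post)
  B_left : ∀ (b : B) (x : M) (post : List M),
    toFun ((ι b * x) :: post) = b * toFun (x :: post)
  B_right : ∀ (pre : List M) (x : M) (b : B),
    toFun (pre ++ [x * ι b]) = toFun (pre ++ [x]) * b
  B_mid : ∀ (pre : List M) (x : M) (b : B) (y : M) (post : List M),
    toFun (pre ++ (x * ι b) :: y :: post) = toFun (pre ++ x :: (ι b * y) :: post)

/-- Auxiliary operation: multiply the most recently collected argument of an open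
bracket (arguments are stored in reverse order) on the right by `ι b`. -/
def closeArg (ι : B →ₐ[ℂ] M) (b : B) : List M → List M
  | [] => []
  | a :: t => (a * ι b) :: t

/-- One step of the evaluation of the bracketing `π⟨m₁, …, mₙ⟩`.  The state consists of a
stack of argument lists (in reverse order) for the currently open brackets, together with
the product of the values of the already closed outermost brackets.  When `i` is the least
element of its block a new bracket is opened; `m i` is appended to the innermost open
bracket; when `i` is the greatest element of its block the innermost bracket `⟨…⟩` is
evaluated via `κ` and its value is multiplied into the preceding argument of the enclosing
bracket (per the insertion rule), resp. into the outer product (per the disjoint-union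
rule). -/
def bracketingStep (κ : List M → B) (ι : B →ₐ[ℂ] M) {n : ℕ} (P : Finset (Finset (Fin n)))
    (m : Fin n → M) (s : List (List M) × B) (i : Fin n) : List (List M) × B :=
  let st₁ : List (List M) := if IsBlockMin P i then [] :: s.1 else s.1
  let st₂ : List (List M) :=
    match st₁ with
    | [] => []
    | ts :: rest => (m i :: ts) :: rest
  if IsBlockMax P i then
    match st₂ with
    | [] => ([], s.2)
    | ts :: rest =>
        let b := κ ts.reverse
        match rest with
        | [] => ([], s.2 * b)
        | us :: rest' => (closeArg ι b us :: rest', s.2)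
  else (st₂, s.2)

/-- The bracketing `π⟨m₁, …, mₙ⟩ ∈ B` determined by a non-crossing partition `P` and a
multiplicative map `κ`: each block of `P` is interpreted as a bracket `⟨⋯⟩`, inner blocks
being inserted (as elements of `B`) after the preceding element of the enclosing block,
and the values of the outermost brackets being multiplied in order. -/
def bracketing (κ : List M → B) (ι : B →ₐ[ℂ] M) {n : ℕ} (P : Finset (Finset (Fin n)))
    (m : Fin n → M) : B :=
  ((List.finRange n).foldl (bracketingStep κ ι P m) ([], 1)).2

/-- `κ` is the `B`-valued cumulant map `{⋯}_E` of the `B`-probability space `(M, E)`: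
a multiplicative map satisfying the moment–cumulant formula
`E(m₁ ⋯ mₙ) = Σ_{π ∈ NC(n)} π{m₁, …, mₙ}_E`. -/
def IsCumulantMap (ι : B →ₐ[ℂ] M) (E : M →ₗ[ℂ] B) (κ : MultiplicativeMap ι) : Prop :=
  ∀ (n : ℕ) (m : Fin n → M), 0 < n →
    E (((List.finRange n).map m).prod) = ∑ P ∈ NC n, bracketing κ.toFun ι P m

/-- The cumulant series `k_{i₁,…,i_{k+1}}(b₁, …, b_k) = {X_{i₁} b₁, …, X_{i_k} b_k, X_{i_{k+1}}}`
of a family `X₁, …, X_N` with respect to a multiplicative map `κ`. -/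
def cumulantSeries {ι : B →ₐ[ℂ] M} (κ : MultiplicativeMap ι) {N : ℕ} (X : Fin N → M)
    {k : ℕ} (i : Fin (k + 1) → Fin N) (b : Fin k → B) : B :=
  κ.toFun (((List.finRange k).map fun j => X (i j.castSucc) * ι (b j)) ++ [X (i (Fin.last k))])

/-- `E : M → B` is a conditional expectation onto the unital subalgebra `ι(B) ⊆ M`. -/
def IsCondExp (ι : B →ₐ[ℂ] M) (E : M →ₗ[ℂ] B) : Prop :=
  E 1 = 1 ∧ ∀ (b b' : B) (m : M), E (ι b * m * ι b') = b * E m * b'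

/-- The subalgebras `A₁, A₂ ⊆ M` are free with amalgamation (with respect to the
`D`-valued expectation `G`, `D` being a common subalgebra of `A₁` and `A₂`): any
alternating product of `G`-centered elements of `A₁` and `A₂` is `G`-centered. -/
def FreeWithAmalgamation (G : M → B) (A₁ A₂ : Subalgebra ℂ M) : Prop :=
  ∀ l : List (M × Bool), l ≠ [] →
    List.Chain' (fun p q : M × Bool => p.2 ≠ q.2) l →
    (∀ p ∈ l, p.1 ∈ (if p.2 then A₁ else A₂) ∧ G p.1 = 0) →
    G (l.map Prod.fst).prod = 0

end Brack

end OVFree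

open OVFree

/-!
Group the non-crossing partitions in the moment–cumulant formula by the block of the first letter.
Each gap of that block recombines to its expectation, so `E (n₁ b₁ ⋯ n_k b_k)` is a sum over
subsequences starting with `n₁` of cumulants whose `B`-entries are expectations of gaps. The full
subsequence occurs in this sum, so the moments determine the cumulants recursively.

By faithfulness of `F`, freeness says exactly that `E`, and not only `F ∘ E`, kills the alternating
words of centered letters that begin and end in `N`. If the cumulants factor through `F`, then a
first block with a centered gap contributes nothing, and an induction on the length of the word
shows that these words vanish. Conversely, suppose they vanish. Any gap is the sum of an element of
`D`, which the factored cumulants treat like the true ones, and of an element `Z` with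
`F (E (n Z)) = 0` for all `n` in `N`, which may be merged with the letters after it. Hence the
factored cumulants satisfy the same recursion as the true ones, and the two agree.
-/

namespace OVFree

/-! ### Non-crossing partitions as bracket words -/

section Words

/-- The indices of the brackets left open by the first `i` letters of `w`, innermost first.  The
letter `w j = (o, c)` opens a bracket before position `j` if `o` and closes the innermost open
bracket after position `j` if `c`. -/
def openStack (w : ℕ → Bool × Bool) : ℕ → List ℕ
  | 0 => []
  | i + 1 =>
    let s := if (w i).1 then i :: openStack w i else openStack w i
    if (w i).2 then s.tail else s

/-- The indices of the open brackets at position `i`, after the opening and before the closing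
instruction of `w i`. -/
def innerStack (w : ℕ → Bool × Bool) (i : ℕ) : List ℕ :=
  if (w i).1 then i :: openStack w i else openStack w i

/-- The index at which the bracket containing position `i` was opened. -/
def opener (w : ℕ → Bool × Bool) (i : ℕ) : ℕ := (innerStack w i).headD 0

/-- The first `n` letters of `w` form a balanced bracketing of `n` positions. -/
def IsBalanced (w : ℕ → Bool × Bool) (n : ℕ) : Prop :=
  (∀ i < n, innerStack w i ≠ []) ∧ openStack w n = []

variable {w : ℕ → Bool × Bool}

lemma openStack_succ (w : ℕ → Bool × Bool) (i : ℕ) :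
    openStack w (i + 1) = if (w i).2 then (innerStack w i).tail else innerStack w i := rfl

lemma openStack_succ_subset (w : ℕ → Bool × Bool) (i : ℕ) :
    openStack w (i + 1) ⊆ innerStack w i := by
  rw [openStack_succ]
  split_ifs
  exacts [List.tail_subset _, List.Subset.refl _]

lemma mem_innerStack {i x : ℕ} :
    x ∈ innerStack w i ↔ ((w i).1 = true ∧ x = i) ∨ x ∈ openStack w i := by
  unfold innerStack
  split_ifs <;> simp_all

lemma lt_of_mem_openStack {i x : ℕ} (hx : x ∈ openStack w i) : x < i := by
  induction i with
  | zero => simp [openStack] at hx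
  | succ i ih =>
    rcases mem_innerStack.1 (openStack_succ_subset w i hx) with ⟨-, rfl⟩ | h
    exacts [Nat.lt_succ_self _, (ih h).trans (Nat.lt_succ_self _)]

lemma le_of_mem_innerStack {i x : ℕ} (hx : x ∈ innerStack w i) : x ≤ i := by
  rcases mem_innerStack.1 hx with ⟨-, rfl⟩ | h
  exacts [le_rfl, (lt_of_mem_openStack h).le]

lemma pairwise_innerStack_of_openStack {i : ℕ} (h : (openStack w i).Pairwise (· > ·)) :
    (innerStack w i).Pairwise (· > ·) := by
  unfold innerStack
  split_ifs
  exacts [List.pairwise_cons.2 ⟨fun _ hx => lt_of_mem_openStack hx, h⟩, h]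

lemma pairwise_openStack (w : ℕ → Bool × Bool) (i : ℕ) : (openStack w i).Pairwise (· > ·) := by
  induction i with
  | zero => simp [openStack]
  | succ i ih =>
    have h := pairwise_innerStack_of_openStack ih
    rw [openStack_succ]
    split_ifs
    exacts [h.tail, h]

lemma pairwise_innerStack (w : ℕ → Bool × Bool) (i : ℕ) : (innerStack w i).Pairwise (· > ·) :=
  pairwise_innerStack_of_openStack (pairwise_openStack w i)

lemma mem_innerStack_of_le {x i j : ℕ} (hij : i ≤ j) (hx : x ∈ innerStack w j) (hxi : x ≤ i) :
    x ∈ innerStack w i := by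
  induction j, hij using Nat.le_induction with
  | base => exact hx
  | succ j hj ih =>
    rcases mem_innerStack.1 hx with ⟨-, rfl⟩ | h
    exacts [absurd hxi (by omega), ih (openStack_succ_subset w j h)]

lemma opener_mem {i : ℕ} (h : innerStack w i ≠ []) : opener w i ∈ innerStack w i := by
  obtain ⟨a, t, hat⟩ := List.exists_cons_of_ne_nil h
  simp [opener, hat]

lemma le_opener {i x : ℕ} (hx : x ∈ innerStack w i) : x ≤ opener w i := by
  obtain ⟨a, t, hat⟩ := List.exists_cons_of_ne_nil (List.ne_nil_of_mem hx)
  have hs := hat ▸ pairwise_innerStack w i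
  rw [hat] at hx
  simp only [opener, hat, List.headD_cons]
  rcases List.mem_cons.1 hx with h | h
  exacts [h.le, (List.rel_of_pairwise_cons hs h).le]

lemma opener_le {i : ℕ} (h : innerStack w i ≠ []) : opener w i ≤ i :=
  le_of_mem_innerStack (opener_mem h)

lemma opener_eq {i a : ℕ} (ha : a ∈ innerStack w i) (hmax : ∀ x ∈ innerStack w i, x ≤ a) :
    opener w i = a :=
  le_antisymm (hmax _ (opener_mem (List.ne_nil_of_mem ha))) (le_opener ha)

lemma mem_tail_innerStack {i x : ℕ} :
    x ∈ (innerStack w i).tail ↔ x ∈ innerStack w i ∧ x ≠ opener w i := by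
  rcases hst : innerStack w i with - | ⟨a, t⟩
  · simp
  · have hs : (a :: t).Pairwise (· > ·) := hst ▸ pairwise_innerStack w i
    have ha : ∀ y ∈ t, y < a := fun y hy => List.rel_of_pairwise_cons hs hy
    simp only [opener, hst, List.tail_cons, List.mem_cons, List.headD_cons]
    exact ⟨fun hx => ⟨Or.inr hx, (ha x hx).ne⟩, fun ⟨hx, hne⟩ => hx.resolve_left hne⟩

lemma mem_openStack_succ {i x : ℕ} :
    x ∈ openStack w (i + 1) ↔ x ∈ innerStack w i ∧ ((w i).2 = true → x ≠ opener w i) := by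
  rw [openStack_succ]
  split_ifs with h
  · simp [mem_tail_innerStack, h]
  · simp [h]

lemma opener_eq_self_iff {i : ℕ} (h : innerStack w i ≠ []) : opener w i = i ↔ (w i).1 = true := by
  constructor
  · intro hi
    have hmem := opener_mem h
    rw [hi] at hmem
    exact ((mem_innerStack.1 hmem).resolve_right fun h' => (lt_of_mem_openStack h').false).1
  · intro ho
    simp [opener, innerStack, ho]

lemma opener_mem_innerStack_opener {i : ℕ} (h : innerStack w i ≠ []) :
    opener w i ∈ innerStack w (opener w i) :=
  mem_innerStack_of_le (opener_le h) (opener_mem h) le_rfl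

lemma opener_opener {i : ℕ} (h : innerStack w i ≠ []) : opener w (opener w i) = opener w i :=
  opener_eq (opener_mem_innerStack_opener h) fun _ => le_of_mem_innerStack

lemma exists_opener_eq_of_mem_openStack {n k x : ℕ} (hn : openStack w n = []) (hk : k ≤ n)
    (hx : x ∈ openStack w k) : ∃ j, k ≤ j ∧ j < n ∧ opener w j = x := by
  induction hk using Nat.decreasingInduction with
  | self => simp [hn] at hx
  | of_succ k hk ih =>
    by_cases hop : opener w k = x
    · exact ⟨k, le_rfl, hk, hop⟩
    · obtain ⟨j, hkj, hjn, hj⟩ := ih (mem_openStack_succ.2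
        ⟨mem_innerStack.2 (Or.inr hx), fun _ h => hop h.symm⟩)
      exact ⟨j, by omega, hjn, hj⟩

/-- `q` labels each position `i < n` by the least position of its block in a non-crossing
partition of `{0, …, n - 1}`. -/
structure IsNCLabelling (n : ℕ) (q : ℕ → ℕ) : Prop where
  le : ∀ i < n, q i ≤ i
  idem : ∀ i < n, q (q i) = q i
  nonCrossing : ∀ a b c d, a < b → b < c → c < d → d < n → q a = q c → q b = q d → q a = q b

/-- `w i` opens a bracket exactly at the least, and closes it exactly at the greatest position of
a block of the labelling `q` of `{0, …, n - 1}`. -/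
structure IsFlagWord (n : ℕ) (q : ℕ → ℕ) (w : ℕ → Bool × Bool) : Prop where
  opens_iff : ∀ i < n, (w i).1 = true ↔ q i = i
  closes_iff : ∀ i < n, (w i).2 = true ↔ ∀ j < n, q j = q i → j ≤ i

lemma IsFlagWord.eq {n : ℕ} {q : ℕ → ℕ} {w w' : ℕ → Bool × Bool} (h : IsFlagWord n q w)
    (h' : IsFlagWord n q w') {i : ℕ} (hi : i < n) : w i = w' i :=
  Prod.ext (Bool.eq_iff_iff.2 ((h.opens_iff i hi).trans (h'.opens_iff i hi).symm))
    (Bool.eq_iff_iff.2 ((h.closes_iff i hi).trans (h'.closes_iff i hi).symm))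

lemma IsBalanced.isNCLabelling_opener {n : ℕ} (hw : IsBalanced w n) :
    IsNCLabelling n (opener w) where
  le i hi := opener_le (hw.1 i hi)
  idem i hi := opener_opener (hw.1 i hi)
  nonCrossing a b c d hab hbc hcd hd hac hbd := by
    have ha := opener_le (hw.1 a (by omega))
    have hb := opener_le (hw.1 b (by omega))
    have hc : opener w a ∈ innerStack w c := hac ▸ opener_mem (hw.1 c (by omega))
    have hd : opener w b ∈ innerStack w d := hbd ▸ opener_mem (hw.1 d hd)
    exact le_antisymm (le_opener (mem_innerStack_of_le hbc.le hc (by omega)))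
      (hac ▸ le_opener (mem_innerStack_of_le hcd.le hd (by omega)))

lemma IsBalanced.isFlagWord_opener {n : ℕ} (hw : IsBalanced w n) : IsFlagWord n (opener w) w where
  opens_iff i hi := (opener_eq_self_iff (hw.1 i hi)).symm
  closes_iff i hi := by
    have hmem := opener_mem (hw.1 i hi)
    have hle := opener_le (hw.1 i hi)
    constructor
    · intro hc j hj hji
      by_contra! hij
      have hmem' : opener w i ∈ innerStack w (i + 1) :=
        mem_innerStack_of_le hij (hji ▸ opener_mem (hw.1 j hj)) (by omega)
      have hopen := (mem_innerStack.1 hmem').resolve_left fun h => by omega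
      exact (mem_openStack_succ.1 hopen).2 hc rfl
    · intro hlast
      by_contra hc
      have hopen : opener w i ∈ openStack w (i + 1) :=
        mem_openStack_succ.2 ⟨hmem, fun h => absurd h hc⟩
      obtain ⟨j, hij, hjn, hj⟩ := exists_opener_eq_of_mem_openStack hw.2 hi hopen
      exact absurd (hlast j hjn hj) (by omega)

section FlagWord

variable {n : ℕ} {q : ℕ → ℕ}

lemma mem_innerStack_iff_of_openStack (hq : IsNCLabelling n q) (hw : IsFlagWord n q w) {i : ℕ}
    (hi : i < n) (hstack : ∀ x, x ∈ openStack w i ↔ x < i ∧ ∃ j, i ≤ j ∧ j < n ∧ q j = x) (x : ℕ) :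
    x ∈ innerStack w i ↔ x ≤ i ∧ ∃ j, i ≤ j ∧ j < n ∧ q j = x := by
  rw [mem_innerStack, hstack, hw.opens_iff i hi]
  constructor
  · rintro (⟨hqi, rfl⟩ | ⟨hxi, hj⟩)
    exacts [⟨le_rfl, x, le_rfl, hi, hqi⟩, ⟨hxi.le, hj⟩]
  · rintro ⟨hxi, j, hij, hjn, hj⟩
    rcases hxi.eq_or_lt with rfl | hlt
    · exact Or.inl ⟨by rw [← hj, hq.idem j hjn], rfl⟩
    · exact Or.inr ⟨hlt, j, hij, hjn, hj⟩

lemma opener_eq_of_mem_innerStack_iff (hq : IsNCLabelling n q) {i : ℕ} (hi : i < n)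
    (hstack : ∀ x, x ∈ innerStack w i ↔ x ≤ i ∧ ∃ j, i ≤ j ∧ j < n ∧ q j = x) :
    opener w i = q i := by
  refine opener_eq ((hstack _).2 ⟨hq.le i hi, i, le_rfl, hi, rfl⟩) fun x hx => ?_
  obtain ⟨hxi, j, hij, hjn, rfl⟩ := (hstack x).1 hx
  by_contra! hlt
  have hne : q i ≠ q j := hlt.ne
  have hji : q j < i := lt_of_le_of_ne hxi fun h => hne (by rw [← h, hq.idem j hjn])
  have hlt' : i < j := lt_of_le_of_ne hij fun h => hne (congrArg q h)
  have hcross := hq.nonCrossing (q i) (q j) i j hlt hji hlt' hjn (hq.idem i hi) (hq.idem j hjn)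
  exact hne (by rwa [hq.idem i hi, hq.idem j hjn] at hcross)

lemma mem_openStack_iff (hq : IsNCLabelling n q) (hw : IsFlagWord n q w) {i : ℕ} (hi : i ≤ n)
    (x : ℕ) : x ∈ openStack w i ↔ x < i ∧ ∃ j, i ≤ j ∧ j < n ∧ q j = x := by
  induction i generalizing x with
  | zero => simp [openStack]
  | succ i ih =>
    have hstack := mem_innerStack_iff_of_openStack hq hw hi (ih (Nat.le_of_succ_le hi))
    rw [mem_openStack_succ, hstack, opener_eq_of_mem_innerStack_iff hq hi hstack,
      hw.closes_iff i hi]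
    constructor
    · rintro ⟨⟨hxi, j, hij, hjn, rfl⟩, hclose⟩
      refine ⟨Nat.lt_succ_of_le hxi, ?_⟩
      rcases hij.eq_or_lt with rfl | hlt
      · have hlater : ¬∀ k < n, q k = q i → k ≤ i := fun h => hclose h rfl
        push Not at hlater
        obtain ⟨k, hkn, hk, hik⟩ := hlater
        exact ⟨k, hik, hkn, hk⟩
      · exact ⟨j, hlt, hjn, rfl⟩
    · rintro ⟨hxi, j, hij, hjn, rfl⟩
      exact ⟨⟨Nat.le_of_lt_succ hxi, j, Nat.le_of_succ_le hij, hjn, rfl⟩,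
        fun hclose hj => absurd (hclose j hjn hj) (Nat.not_le.2 hij)⟩

lemma IsFlagWord.mem_innerStack_iff (hw : IsFlagWord n q w) (hq : IsNCLabelling n q) {i : ℕ}
    (hi : i < n) (x : ℕ) : x ∈ innerStack w i ↔ x ≤ i ∧ ∃ j, i ≤ j ∧ j < n ∧ q j = x :=
  mem_innerStack_iff_of_openStack hq hw hi (mem_openStack_iff hq hw hi.le) x

lemma IsFlagWord.opener_eq (hw : IsFlagWord n q w) (hq : IsNCLabelling n q) {i : ℕ} (hi : i < n) :
    opener w i = q i :=
  opener_eq_of_mem_innerStack_iff hq hi (hw.mem_innerStack_iff hq hi)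

lemma IsFlagWord.isBalanced (hw : IsFlagWord n q w) (hq : IsNCLabelling n q) : IsBalanced w n := by
  refine ⟨fun i hi => List.ne_nil_of_mem
    ((hw.mem_innerStack_iff hq hi _).2 ⟨hq.le i hi, i, le_rfl, hi, rfl⟩), ?_⟩
  refine List.eq_nil_iff_forall_not_mem.2 fun x hx => ?_
  obtain ⟨-, j, hnj, hjn, -⟩ := (mem_openStack_iff hq hw le_rfl x).1 hx
  omega

end FlagWord

end Words

section Partitions

variable {n : ℕ}

/-- The partition of `Fin n` into the fibres of `q`. -/
def fibers (n : ℕ) (q : ℕ → ℕ) : Finset (Finset (Fin n)) :=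
  Finset.univ.image fun i : Fin n => Finset.univ.filter fun j : Fin n => q j = q i

lemma mem_fibers {q : ℕ → ℕ} {t : Finset (Fin n)} :
    t ∈ fibers n q ↔ ∃ i : Fin n, ∀ j : Fin n, j ∈ t ↔ q j = q i := by
  simp [fibers, Finset.ext_iff, eq_comm, iff_comm]

lemma mem_iff_of_mem_fibers {q : ℕ → ℕ} {t : Finset (Fin n)} (ht : t ∈ fibers n q) {i j : Fin n}
    (hi : i ∈ t) : j ∈ t ↔ q j = q i := by
  obtain ⟨k, hk⟩ := mem_fibers.1 ht
  rw [hk, (hk i).1 hi]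

lemma isPartition_fibers (n : ℕ) (q : ℕ → ℕ) : IsPartition (fibers n q) := by
  constructor
  · intro t ht
    obtain ⟨i, hi⟩ := mem_fibers.1 ht
    exact ⟨i, (hi i).2 rfl⟩
  · intro i
    refine ⟨Finset.univ.filter fun j : Fin n => q j = q i, by simp [fibers], ?_⟩
    rintro t ⟨ht, hi⟩
    ext j
    simp [mem_iff_of_mem_fibers ht hi]

lemma forall_mem_block_fibers_iff {q : ℕ → ℕ} {i : Fin n} {p : Fin n → Prop} :
    (∀ t ∈ fibers n q, i ∈ t → ∀ j ∈ t, p j) ↔ ∀ j : Fin n, q j = q i → p j := by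
  constructor
  · intro h j hj
    exact h (Finset.univ.filter fun j : Fin n => q j = q i) (by simp [fibers]) (by simp) j
      (by simpa using hj)
  · intro h t ht hi j hj
    exact h j ((mem_iff_of_mem_fibers ht hi).1 hj)

lemma IsNCLabelling.fibers_mem_NC {q : ℕ → ℕ} (hq : IsNCLabelling n q) : fibers n q ∈ NC n := by
  refine Finset.mem_filter.2 ⟨Finset.mem_univ _, isPartition_fibers n q, ?_⟩
  intro a b c d hab hbc hcd t ht u hu ha hc hb hd
  have hqab := hq.nonCrossing a b c d hab hbc hcd d.2 ((mem_iff_of_mem_fibers ht hc).1 ha)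
    ((mem_iff_of_mem_fibers hu hd).1 hb)
  exact ((isPartition_fibers n q).2 b).unique
    ⟨ht, (mem_iff_of_mem_fibers ht ha).2 hqab.symm⟩ ⟨hu, hb⟩

lemma fibers_congr {q q' : ℕ → ℕ} (h : ∀ i < n, q i = q' i) : fibers n q = fibers n q' := by
  simp only [fibers, h _ (Fin.is_lt _)]

lemma exists_fibers_eq {P : Finset (Finset (Fin n))} (hP : IsPartition P) :
    ∃ q, (∀ i < n, q i ≤ i) ∧ (∀ i < n, q (q i) = q i) ∧ fibers n q = P := by
  obtain ⟨hne, hblock⟩ := hP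
  choose t ht hunique using hblock
  have eq_block : ∀ {u i}, u ∈ P → i ∈ u → u = t i := fun hu hi => hunique _ _ ⟨hu, hi⟩
  let leader : Fin n → Fin n := fun i => (t i).min' ⟨i, (ht i).2⟩
  have leader_le : ∀ i, leader i ≤ i := fun i => Finset.min'_le _ _ (ht i).2
  have block_leader : ∀ i, t (leader i) = t i := fun i =>
    (eq_block (ht i).1 (Finset.min'_mem _ _)).symm
  have leader_eq_iff : ∀ i j, leader i = leader j ↔ t i = t j := fun i j =>
    ⟨fun h => by rw [← block_leader i, h, block_leader], fun h => by simp only [leader, h]⟩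
  let q : ℕ → ℕ := fun i => if h : i < n then leader ⟨i, h⟩ else i
  have q_coe : ∀ i : Fin n, q i = leader i := fun i => by simp [q]
  have mem_block : ∀ i j, j ∈ t i ↔ q j = q i := fun i j => by
    rw [q_coe, q_coe, Fin.val_inj, leader_eq_iff]
    exact ⟨fun h => (eq_block (ht i).1 h).symm, fun h => h ▸ (ht j).2⟩
  refine ⟨q, fun i hi => ?_, fun i hi => ?_, ?_⟩
  · exact (q_coe ⟨i, hi⟩).trans_le (leader_le ⟨i, hi⟩)
  · rw [q_coe ⟨i, hi⟩, q_coe, Fin.val_inj, leader_eq_iff, block_leader]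
  · ext u
    rw [mem_fibers]
    constructor
    · rintro ⟨i, hi⟩
      rw [show u = t i from Finset.ext fun j => (hi j).trans (mem_block i j).symm]
      exact (ht i).1
    · intro hu
      obtain ⟨i, hi⟩ := hne u hu
      exact ⟨i, fun j => by rw [eq_block hu hi, mem_block]⟩

lemma exists_isNCLabelling_of_mem_NC {P : Finset (Finset (Fin n))} (hP : P ∈ NC n) :
    ∃ q, IsNCLabelling n q ∧ fibers n q = P := by
  obtain ⟨-, hpart, hnc⟩ := Finset.mem_filter.1 hP
  obtain ⟨q, hle, hidem, rfl⟩ := exists_fibers_eq hpart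
  refine ⟨q, ⟨hle, hidem, fun a b c d hab hbc hcd hd hac hbd => ?_⟩, rfl⟩
  lift d to Fin n using hd
  lift c to Fin n using hcd.trans d.2
  lift b to Fin n using hbc.trans c.2
  lift a to Fin n using hab.trans b.2
  obtain ⟨t, ⟨ht, hat⟩, -⟩ := hpart.2 a
  obtain ⟨u, ⟨hu, hbu⟩, -⟩ := hpart.2 b
  have htu : t = u := hnc a b c d hab hbc hcd t ht u hu hat
    ((mem_iff_of_mem_fibers ht hat).2 hac.symm) hbu ((mem_iff_of_mem_fibers hu hbu).2 hbd.symm)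
  exact (mem_iff_of_mem_fibers hu hbu).1 (htu ▸ hat)

/-- The word on `Fin n` recording which positions are least and which are greatest in their
blocks. -/
def flags (P : Finset (Finset (Fin n))) (i : Fin n) : Bool × Bool :=
  (decide (IsBlockMin P i), decide (IsBlockMax P i))

/-- Extends a word of length `n` to an infinite one; the values beyond `n` are irrelevant. -/
def extendWord (w : Fin n → Bool × Bool) (i : ℕ) : Bool × Bool :=
  if h : i < n then w ⟨i, h⟩ else (false, false)

lemma extendWord_of_lt (w : Fin n → Bool × Bool) {i : ℕ} (h : i < n) :
    extendWord w i = w ⟨i, h⟩ := dif_pos h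

lemma IsNCLabelling.isFlagWord_flags {q : ℕ → ℕ} (hq : IsNCLabelling n q) :
    IsFlagWord n q (extendWord (flags (fibers n q))) where
  opens_iff i hi := by
    rw [extendWord_of_lt _ hi, flags, decide_eq_true_iff]
    refine (forall_mem_block_fibers_iff (p := fun j => ⟨i, hi⟩ ≤ j)).trans ⟨fun h => ?_, ?_⟩
    · have hle := hq.le i hi
      exact le_antisymm hle (h ⟨q i, hle.trans_lt hi⟩ (hq.idem i hi))
    · rintro h ⟨j, hj⟩ (hji : q j = q i)
      exact (h.symm.trans hji.symm).trans_le (hq.le j hj)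
  closes_iff i hi := by
    rw [extendWord_of_lt _ hi, flags, decide_eq_true_iff]
    exact (forall_mem_block_fibers_iff (p := fun j => j ≤ ⟨i, hi⟩)).trans Fin.forall_iff

theorem sum_NC_flags {A : Type*} [AddCommMonoid A] (G : (Fin n → Bool × Bool) → A) :
    ∑ P ∈ NC n, G (flags P) =
      ∑ w : Fin n → Bool × Bool, if IsBalanced (extendWord w) n then G w else 0 := by
  rw [← Finset.sum_filter]
  refine Finset.sum_bij' (fun P _ => flags P) (fun w _ => fibers n (opener (extendWord w)))
    (fun P hP => ?_) (fun w hw => ?_) (fun P hP => ?_) (fun w hw => ?_) fun _ _ => rfl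
  · obtain ⟨q, hq, rfl⟩ := exists_isNCLabelling_of_mem_NC hP
    exact Finset.mem_filter.2 ⟨Finset.mem_univ _, hq.isFlagWord_flags.isBalanced hq⟩
  · exact (Finset.mem_filter.1 hw).2.isNCLabelling_opener.fibers_mem_NC
  · obtain ⟨q, hq, rfl⟩ := exists_isNCLabelling_of_mem_NC hP
    exact fibers_congr fun i hi => hq.isFlagWord_flags.opener_eq hq hi
  · have hw := (Finset.mem_filter.1 hw).2
    funext i
    have h := hw.isNCLabelling_opener.isFlagWord_flags.eq hw.isFlagWord_opener i.2
    rwa [extendWord_of_lt, extendWord_of_lt] at h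

end Partitions

section StackMachine

/-- A word of opening and closing instructions that, started with `d` open brackets, never has an
empty stack between opening and closing and ends with no open bracket. -/
def IsBalancedFrom : ℕ → List (Bool × Bool) → Prop
  | d, [] => d = 0
  | d, p :: w => 1 ≤ d + p.1.toNat ∧ IsBalancedFrom (d + p.1.toNat - p.2.toNat) w

lemma length_innerStack (w : ℕ → Bool × Bool) (i : ℕ) :
    (innerStack w i).length = (openStack w i).length + (w i).1.toNat := by
  unfold innerStack
  cases (w i).1 <;> simp

lemma length_openStack_succ (w : ℕ → Bool × Bool) (i : ℕ) :
    (openStack w (i + 1)).length = (innerStack w i).length - (w i).2.toNat := by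
  rw [openStack_succ]
  cases (w i).2 <;> simp

lemma isBalancedFrom_length_openStack_iff (w : ℕ → Bool × Bool) (n k : ℕ) :
    IsBalancedFrom (openStack w k).length (List.ofFn fun i : Fin n => w (k + i)) ↔
      (∀ i < n, innerStack w (k + i) ≠ []) ∧ openStack w (k + n) = [] := by
  induction n generalizing k with
  | zero => simp [IsBalancedFrom]
  | succ n ih =>
    have ih := ih (k + 1)
    simp only [Nat.add_right_comm k 1] at ih
    simp only [List.ofFn_succ, Fin.val_zero, Fin.val_succ, add_zero, ← add_assoc, IsBalancedFrom,
      ← length_innerStack, ← length_openStack_succ, ih, Nat.forall_lt_succ_left,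
      Nat.one_le_iff_ne_zero, ne_eq, List.length_eq_zero_iff, and_assoc]

lemma isBalanced_extendWord_iff {n : ℕ} (w : Fin n → Bool × Bool) :
    IsBalanced (extendWord w) n ↔ IsBalancedFrom 0 (List.ofFn w) := by
  have h := isBalancedFrom_length_openStack_iff (extendWord w) n 0
  simpa [IsBalanced, openStack, extendWord_of_lt] using h.symm

variable {B M : Type*} [Ring B] [Algebra ℂ B] [Ring M] [Algebra ℂ M]
variable (κ : List M → B) (ι : B →ₐ[ℂ] M)

/-- Evaluates the innermost bracket, whose reversed argument list is `ts`, and multiplies its value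
into the enclosing bracket, or into the accumulated outer product `acc` if there is none. -/
def closeBracket (ts : List M) (rest : List (List M)) (acc : B) : List (List M) × B :=
  match rest with
  | [] => ([], acc * κ ts.reverse)
  | us :: rest' => (closeArg ι (κ ts.reverse) us :: rest', acc)

/-- `bracketingStep` driven by the letter `p.1` of a flag word instead of a partition, reading the
argument `p.2`. -/
def flagStep (s : List (List M) × B) (p : (Bool × Bool) × M) : List (List M) × B :=
  match if p.1.1 then [] :: s.1 else s.1 with
  | [] => ([], s.2)
  | ts :: rest =>
    if p.1.2 then closeBracket κ ι (p.2 :: ts) rest s.2 else ((p.2 :: ts) :: rest, s.2)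

lemma bracketing_eq_foldl_flagStep {n : ℕ} (P : Finset (Finset (Fin n))) (m : Fin n → M) :
    bracketing κ ι P m =
      ((List.ofFn fun i => (flags P i, m i)).foldl (flagStep κ ι) ([], 1)).2 := by
  have hstep : bracketingStep κ ι P m = fun s i => flagStep κ ι s (flags P i, m i) := by
    funext ⟨st, acc⟩ i
    unfold bracketingStep flagStep flags
    by_cases hmin : IsBlockMin P i <;> by_cases hmax : IsBlockMax P i <;>
      rcases st with _ | ⟨us, _ | ⟨vs, r⟩⟩ <;> simp [hmin, hmax, closeBracket]
  rw [bracketing, hstep, List.ofFn_eq_map, List.foldl_map]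

/-- The sum, over all ways of completing a bracketing by reading the arguments `l`, of its value,
when the brackets with reversed argument lists `st` (innermost first) are still open and the product
of the brackets already closed is `acc`. -/
def bracketSum : List M → List (List M) → B → B
  | [], st, acc => if st = [] then acc else 0
  | m :: l, st, acc =>
    (bracketSum l (closeBracket κ ι [m] st acc).1 (closeBracket κ ι [m] st acc).2 +
      bracketSum l ([m] :: st) acc) +
    match st with
    | [] => 0
    | ts :: rest =>
      bracketSum l (closeBracket κ ι (m :: ts) rest acc).1
        (closeBracket κ ι (m :: ts) rest acc).2 +
      bracketSum l ((m :: ts) :: rest) acc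

lemma length_closeBracket (ts : List M) (rest : List (List M)) (acc : B) :
    (closeBracket κ ι ts rest acc).1.length = rest.length := by
  cases rest <;> simp [closeBracket]

lemma sum_foldl_flagStep {n : ℕ} (m : Fin n → M) (s : List (List M) × B) {d : ℕ}
    (hd : s.1.length = d) :
    (∑ w : Fin n → Bool × Bool, if IsBalancedFrom d (List.ofFn w) then
      ((List.ofFn fun i => (w i, m i)).foldl (flagStep κ ι) s).2 else 0) =
    bracketSum κ ι (List.ofFn m) s.1 s.2 := by
  induction n generalizing s d with
  | zero => subst hd; simp [bracketSum, IsBalancedFrom]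
  | succ n ih =>
    obtain ⟨st, acc⟩ := s
    subst hd
    rw [← (Fin.consEquiv (fun _ => Bool × Bool)).sum_comp, Fintype.sum_prod_type,
      Fintype.sum_prod_type]
    simp only [Fin.consEquiv_apply, List.ofFn_succ, Fin.cons_zero, Fin.cons_succ,
      List.foldl_cons, Fintype.sum_bool, IsBalancedFrom]
    have h := fun s' => (ih (fun i => m i.succ) s' rfl).symm
    rcases st with - | ⟨ts, rest⟩
    · simp only [bracketSum, h ([[m 0]], acc), h (closeBracket κ ι [m 0] [] acc)]
      simp [flagStep, length_closeBracket]
    · simp only [bracketSum, h ([m 0] :: ts :: rest, acc), h ((m 0 :: ts) :: rest, acc),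
        h (closeBracket κ ι [m 0] (ts :: rest) acc), h (closeBracket κ ι (m 0 :: ts) rest acc)]
      simp [flagStep, length_closeBracket]

lemma bracketSum_mul_acc (b : B) (l : List M) (st : List (List M)) (acc : B) :
    bracketSum κ ι l st (b * acc) = b * bracketSum κ ι l st acc := by
  induction l generalizing st acc with
  | nil => simp [bracketSum]
  | cons m l ih =>
    rcases st with _ | ⟨ts, _ | ⟨us, r⟩⟩ <;>
      simp only [bracketSum, closeBracket, mul_assoc, ih, mul_add, mul_zero]

variable {ι} {E : M →ₗ[ℂ] B}

theorem expectation_prod_eq_bracketSum (hE : IsCondExp ι E) {κ : MultiplicativeMap ι}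
    (hκ : IsCumulantMap ι E κ) (l : List M) : E l.prod = bracketSum κ.toFun ι l [] 1 := by
  rcases Nat.eq_zero_or_pos l.length with hl | hl
  · simp [List.length_eq_zero_iff.1 hl, bracketSum, hE.1]
  · have hcum := hκ l.length l.get hl
    rw [← List.ofFn_eq_map, List.ofFn_get] at hcum
    simp only [hcum, bracketing_eq_foldl_flagStep]
    rw [sum_NC_flags fun w =>
      ((List.ofFn fun i => (w i, l.get i)).foldl (flagStep κ.toFun ι) ([], 1)).2]
    simp only [isBalanced_extendWord_iff]
    exact (sum_foldl_flagStep κ.toFun ι l.get ([], 1) rfl).trans (by rw [List.ofFn_get])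

end StackMachine

/-! ### The recursion on the first block -/

section SplitSum

variable {α β A : Type*} [AddCommMonoid A]

/-- The sum of `φ R m l'` over all decompositions `l = R ++ m :: l'`. -/
def splitSum : List α → (List α → α → List α → A) → A
  | [], _ => 0
  | m :: l, φ => φ [] m l + splitSum l fun R => φ (m :: R)

lemma splitSum_add (l : List α) (φ ψ : List α → α → List α → A) :
    splitSum l (fun R m l' => φ R m l' + ψ R m l') = splitSum l φ + splitSum l ψ := by
  induction l generalizing φ ψ with
  | nil => simp [splitSum]
  | cons m l ih => simp only [splitSum, ih, add_add_add_comm]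

lemma splitSum_map (g : α → β) (l : List α) (φ : List β → β → List β → A) :
    splitSum (l.map g) φ = splitSum l fun R m l' => φ (R.map g) (g m) (l'.map g) := by
  induction l generalizing φ with
  | nil => rfl
  | cons m l ih => simp only [List.map_cons, splitSum, ih, List.map_nil]

lemma splitSum_congr {l : List α} {φ ψ : List α → α → List α → A}
    (h : ∀ R m l', R ++ m :: l' = l → φ R m l' = ψ R m l') : splitSum l φ = splitSum l ψ := by
  induction l generalizing φ ψ with
  | nil => rfl
  | cons m l ih =>
    exact congrArg₂ (· + ·) (h _ _ _ rfl)
      (ih fun R m' l' hl' => h (m :: R) m' l' (congrArg (m :: ·) hl'))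

lemma splitSum_eq_zero {l : List α} {φ : List α → α → List α → A}
    (h : ∀ R m l', R ++ m :: l' = l → φ R m l' = 0) : splitSum l φ = 0 := by
  induction l generalizing φ with
  | nil => rfl
  | cons m l ih =>
    rw [splitSum, h [] m l rfl, ih fun R m' l' hl' => h (m :: R) m' l' (congrArg (m :: ·) hl'),
      add_zero]

end SplitSum

section OpenFrame

variable {B M : Type*} [Ring B] [Algebra ℂ B] [Ring M] [Algebra ℂ M]
variable {ι : B →ₐ[ℂ] M} (κ : MultiplicativeMap ι)

lemma bracketSum_acc (l : List M) (st : List (List M)) (acc : B) :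
    bracketSum κ.toFun ι l st acc = acc * bracketSum κ.toFun ι l st 1 := by
  rw [← bracketSum_mul_acc, mul_one]

lemma closeArg_cons (b : B) (m : M) (ts : List M) : closeArg ι b (m :: ts) = (m * ι b) :: ts :=
  rfl

lemma bracketSum_add (l : List M) (up : List (List M)) (p : M) (pre : List M) (x y : M)
    (post : List M) (acc : B) :
    bracketSum κ.toFun ι l (up ++ [p :: (pre ++ (x + y) :: post)]) acc =
      bracketSum κ.toFun ι l (up ++ [p :: (pre ++ x :: post)]) acc +
        bracketSum κ.toFun ι l (up ++ [p :: (pre ++ y :: post)]) acc := by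
  induction l generalizing up p pre acc with
  | nil => simp [bracketSum]
  | cons m l ih =>
    have hbottom := ih []
    simp only [List.nil_append] at hbottom
    rcases up with - | ⟨us, - | ⟨vs, up⟩⟩
    · have hclose : κ.toFun (m :: p :: (pre ++ (x + y) :: post)).reverse =
          κ.toFun (m :: p :: (pre ++ x :: post)).reverse +
            κ.toFun (m :: p :: (pre ++ y :: post)).reverse := by
        simpa using κ.map_add post.reverse x y (pre.reverse ++ [p, m])
      have hopen := ih [[m]] p pre acc
      have hpush := hbottom m (p :: pre) acc
      simp only [List.cons_append, List.nil_append] at hopen hpush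
      have hacc (c c' : B) : bracketSum κ.toFun ι l [] (c + c') =
          bracketSum κ.toFun ι l [] c + bracketSum κ.toFun ι l [] c' := by
        rw [bracketSum_acc, add_mul, ← bracketSum_acc, ← bracketSum_acc]
      simp only [List.nil_append, bracketSum, closeBracket, closeArg_cons, hbottom, hopen, hpush,
        hclose, mul_add, hacc]
      abel
    · have hclose := ih [closeArg ι (κ.toFun [m].reverse) us] p pre acc
      have hopen := ih [[m], us] p pre acc
      have hpush := ih [m :: us] p pre acc
      simp only [List.cons_append, List.nil_append] at hclose hopen hpush
      simp only [List.cons_append, List.nil_append, bracketSum, closeBracket, closeArg_cons,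
        hbottom, hclose, hopen, hpush]
      abel
    · have hclose := ih (closeArg ι (κ.toFun [m].reverse) us :: vs :: up) p pre acc
      have hopen := ih ([m] :: us :: vs :: up) p pre acc
      have hpush := ih ((m :: us) :: vs :: up) p pre acc
      have hclose_push := ih (closeArg ι (κ.toFun (m :: us).reverse) vs :: up) p pre acc
      simp only [List.cons_append] at hclose hopen hpush hclose_push
      simp only [List.cons_append, bracketSum, closeBracket, hclose, hopen, hpush, hclose_push]
      abel

/-- `bracketSum` with a single open bracket, whose reversed argument list is `ts` and which may be
closed at once. -/
def frameSum (l : List M) (ts : List M) : B :=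
  κ.toFun ts.reverse * bracketSum κ.toFun ι l [] 1 + bracketSum κ.toFun ι l [ts] 1

lemma frameSum_add (l : List M) (m a : M) (b b' : B) (ts : List M) :
    frameSum κ l (m :: (a * ι (b + b')) :: ts) =
      frameSum κ l (m :: (a * ι b) :: ts) + frameSum κ l (m :: (a * ι b') :: ts) := by
  have hsum := bracketSum_add κ l [] m [] (a * ι b) (a * ι b') ts 1
  have hκ := κ.map_add ts.reverse (a * ι b) (a * ι b') [m]
  simp only [List.nil_append] at hsum
  simp only [frameSum, map_add, mul_add, hsum, List.reverse_cons, List.append_assoc,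
    List.cons_append, List.nil_append, hκ, add_mul, add_add_add_comm]

lemma frameSum_zero (l : List M) (m a : M) (ts : List M) :
    frameSum κ l (m :: (a * ι 0) :: ts) = 0 := by
  have h := frameSum_add κ l m a 0 0 ts
  rwa [add_zero, left_eq_add] at h

/-- While the bracket `(a * ι b) :: ts` at the bottom of the stack waits for its next argument `m`,
the brackets above it and the arguments `R` read before `m` evaluate to a factor of `a`. -/
lemma bracketSum_bottom_eq_splitSum (l : List M) (up : List (List M)) (a : M) (b : B)
    (ts : List M) : bracketSum κ.toFun ι l (up ++ [(a * ι b) :: ts]) 1 = splitSum l fun R m l' =>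
      frameSum κ l' (m :: (a * ι (bracketSum κ.toFun ι R up b)) :: ts) := by
  induction l generalizing up b with
  | nil => simp [bracketSum, splitSum]
  | cons m l ih =>
    have hnil : bracketSum κ.toFun ι [] [] b = b := if_pos rfl
    rcases up with - | ⟨us, - | ⟨vs, up⟩⟩
    · simp only [splitSum, hnil]
      simp only [bracketSum, add_zero, frameSum_add, splitSum_add, ← ih]
      rw [add_comm (frameSum ..), frameSum]
      simp [closeBracket, closeArg_cons, mul_assoc, bracketSum_acc κ l [] (κ.toFun _)]
    · have hcons : bracketSum κ.toFun ι [] [us] b = 0 := if_neg (by simp)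
      simp only [splitSum, hcons, frameSum_zero, zero_add]
      simp only [bracketSum, closeBracket, frameSum_add, splitSum_add, ← ih]
      simp [closeArg_cons, mul_assoc]
    · have hcons : bracketSum κ.toFun ι [] (us :: vs :: up) b = 0 := if_neg (by simp)
      simp only [splitSum, hcons, frameSum_zero, zero_add]
      simp only [bracketSum, closeBracket, frameSum_add, splitSum_add, ← ih]
      simp

variable {E : M →ₗ[ℂ] B} {κ}

lemma expectation_cons_prod_eq_frameSum (hE : IsCondExp ι E) (hκ : IsCumulantMap ι E κ) (m : M)
    (l : List M) : E (m :: l).prod = frameSum κ l [m] := by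
  rw [expectation_prod_eq_bracketSum hE hκ, frameSum, ← bracketSum_acc]
  simp [bracketSum, closeBracket]

lemma frameSum_cons (hE : IsCondExp ι E) (hκ : IsCumulantMap ι E κ) (l : List M) (m : M)
    (ts : List M) :
    frameSum κ l (m :: ts) = κ.toFun (m :: ts).reverse * E l.prod +
      splitSum l fun R m' l' => frameSum κ l' (m' :: (m * ι (E R.prod)) :: ts) := by
  have h := bracketSum_bottom_eq_splitSum κ l [] m 1 ts
  simp only [map_one, mul_one, List.nil_append, ← expectation_prod_eq_bracketSum hE hκ] at h
  rw [frameSum, h, expectation_prod_eq_bracketSum hE hκ l]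

end OpenFrame

section WordProd

variable {M : Type*} [Monoid M]

/-- The product `m₁ h₁ m₂ h₂ ⋯` of the word `(m₁, h₁), (m₂, h₂), …`. -/
def wordProd (l : List (M × M)) : M :=
  (l.map fun p => p.1 * p.2).prod

lemma wordProd_nil : wordProd ([] : List (M × M)) = 1 :=
  rfl

lemma wordProd_cons (p : M × M) (l : List (M × M)) : wordProd (p :: l) = p.1 * p.2 * wordProd l :=
  List.prod_cons

lemma wordProd_append (l l' : List (M × M)) : wordProd (l ++ l') = wordProd l * wordProd l' := by
  simp [wordProd]

lemma wordProd_mem {S : Type*} [SetLike S M] [SubmonoidClass S M] {N : S} {l : List (M × M)}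
    (hl : ∀ p ∈ l, p.1 ∈ N ∧ p.2 ∈ N) : wordProd l ∈ N :=
  list_prod_mem <| List.forall_mem_map.2 fun p hp => mul_mem (hl p hp).1 (hl p hp).2

end WordProd

section FirstBlockSum

variable {B M : Type*} [Ring B] [Algebra ℂ B] [Ring M] [Algebra ℂ M]
variable {ι : B →ₐ[ℂ] M} {E : M →ₗ[ℂ] B}

lemma IsCondExp.map_mul_right (hE : IsCondExp ι E) (m : M) (b : B) : E (m * ι b) = E m * b := by
  simpa using hE.2 1 b m

lemma IsCondExp.map_mul_left (hE : IsCondExp ι E) (b : B) (m : M) : E (ι b * m) = b * E m := by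
  simpa using hE.2 b 1 m

lemma IsCondExp.map_apply (hE : IsCondExp ι E) (b : B) : E (ι b) = b := by
  simpa [hE.1] using hE.map_mul_right 1 b

variable (ι) in
/-- The word `(n₁, ι b₁), (n₂, ι b₂), …` of the pairs `(n₁, b₁), (n₂, b₂), …`. -/
def toWord (L : List (M × B)) : List (M × M) :=
  L.map (Prod.map id ι)

lemma toWord_nil : toWord ι [] = [] :=
  rfl

lemma toWord_cons (p : M × B) (L : List (M × B)) :
    toWord ι (p :: L) = (p.1, ι p.2) :: toWord ι L :=
  rfl

lemma toWord_append (L L' : List (M × B)) : toWord ι (L ++ L') = toWord ι L ++ toWord ι L' :=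
  List.map_append

/-- The cumulant `{n₁ b₁, …, n_k b_k, n}`, where `L` is the list of the pairs `(n_j, b_j)`. -/
def pairCumulant (κ : MultiplicativeMap ι) : List (M × B) → M → B := fun L n =>
  κ.toFun ((L.map fun p => p.1 * ι p.2) ++ [n])

variable (E) in
/-- The sum, over the subsequences `x₁ = m_{i₁}, …, x_r = m_{i_r}` with `i₁ = 1` of the word
`(m₁, h₁), …, (m_k, h_k)`, of `f [(x₁, E g₁), …, (x_{r-1}, E g_{r-1})] x_r * E g_r`, where `g_j` is
the product of everything strictly between `x_j` and `x_{j+1}`. For `f` the cumulant map, the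
subsequence is the block of the first letter in a non-crossing partition. -/
def firstBlockSum : List (M × M) → (List (M × B) → M → B) → B
  | [], _ => 0
  | [p], f => f [] p.1 * E p.2
  | p :: q :: l, f =>
    firstBlockSum ((p.1, p.2 * q.1 * q.2) :: l) f +
      firstBlockSum (q :: l) fun S => f ((p.1, E p.2) :: S)
termination_by l => l.length

lemma firstBlockSum_cons_eq_splitSum (p : M × M) (l : List (M × M)) (f : List (M × B) → M → B) :
    firstBlockSum E (p :: l) f = f [] p.1 * E (p.2 * wordProd l) + splitSum l fun R q l' =>
      firstBlockSum E (q :: l') fun S => f ((p.1, E (p.2 * wordProd R)) :: S) := by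
  induction l generalizing p with
  | nil => simp [firstBlockSum, splitSum, wordProd_nil]
  | cons q l ih =>
    simp only [firstBlockSum, splitSum, ih, wordProd_cons, wordProd_nil, mul_one, mul_assoc]
    abel

lemma frameSum_eq_firstBlockSum (hE : IsCondExp ι E) {κ : MultiplicativeMap ι}
    (hκ : IsCumulantMap ι E κ) (L : List (M × B)) (p : M × B) (ts : List M) :
    frameSum κ (L.map fun p => p.1 * ι p.2) (p.1 * ι p.2 :: ts) =
      firstBlockSum E (toWord ι (p :: L)) fun S n =>
        κ.toFun (ts.reverse ++ (S.map fun p => p.1 * ι p.2) ++ [n]) := by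
  induction hk : L.length using Nat.strong_induction_on generalizing L p ts with
  | _ k ih =>
    have hprod (R : List (M × B)) : (R.map fun p => p.1 * ι p.2).prod = wordProd (toWord ι R) := by
      simp [wordProd, toWord, Function.comp_def]
    rw [frameSum_cons hE hκ, toWord, List.map_cons, ← toWord,
      firstBlockSum_cons_eq_splitSum, toWord, splitSum_map, splitSum_map, ← toWord]
    congr 1
    · simp [κ.B_right, hE.map_mul_left, hprod, mul_assoc]
    · refine splitSum_congr fun R q L' hL => ?_
      rw [ih L'.length (by simp [← hk, ← hL]; omega) L' q _ rfl]
      simp [toWord, hE.map_mul_left, hprod, mul_assoc]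

/-- Summing over the non-crossing partitions with a given first block, the letters in each gap of
the block recombine to their expectation. -/
theorem expectation_wordProd_eq_firstBlockSum (hE : IsCondExp ι E) {κ : MultiplicativeMap ι}
    (hκ : IsCumulantMap ι E κ) {L : List (M × B)} (hL : L ≠ []) :
    E (wordProd (toWord ι L)) = firstBlockSum E (toWord ι L) (pairCumulant κ) := by
  obtain ⟨p, L, rfl⟩ := List.exists_cons_of_ne_nil hL
  have h := frameSum_eq_firstBlockSum hE hκ L p []
  rw [← expectation_cons_prod_eq_frameSum hE hκ] at h
  unfold pairCumulant
  simpa [wordProd, toWord, Function.comp_def] using h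

lemma expectation_eq_pairCumulant_nil (hE : IsCondExp ι E) {κ : MultiplicativeMap ι}
    (hκ : IsCumulantMap ι E κ) (n : M) : E n = pairCumulant κ [] n := by
  have h := expectation_wordProd_eq_firstBlockSum hE hκ (List.cons_ne_nil (n, 1) [])
  simpa [wordProd, toWord, firstBlockSum, hE.1] using h

lemma firstBlockSum_add (l : List (M × M)) (f f' : List (M × B) → M → B) :
    firstBlockSum E l (f + f') = firstBlockSum E l f + firstBlockSum E l f' := by
  fun_induction firstBlockSum E l f generalizing f' with
  | case1 => simp [firstBlockSum]
  | case2 => simp [firstBlockSum, add_mul]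
  | case3 p q l f ih₁ ih₂ =>
    simp only [firstBlockSum, ih₁]
    rw [add_add_add_comm, ← ih₂ fun S => f' ((p.1, E p.2) :: S)]
    rfl

lemma firstBlockSum_eq_zero {N : Set M} {l : List (M × M)} {f : List (M × B) → M → B}
    (hl : ∀ p ∈ l, p.1 ∈ N)
    (hf : ∀ S : List (M × B), S.length < l.length → (∀ p ∈ S, p.1 ∈ N) → ∀ n ∈ N, f S n = 0) :
    firstBlockSum E l f = 0 := by
  fun_induction firstBlockSum E l f with
  | case1 => rfl
  | case2 p f =>
    rw [hf [] (by simp) (by simp) p.1 (hl p (by simp)), zero_mul]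
  | case3 p q l f ih₁ ih₂ =>
    simp only [List.forall_mem_cons] at hl ih₁ ih₂
    rw [ih₁ ⟨hl.1, hl.2.2⟩ fun S hS => hf S (hS.trans (by simp)),
      ih₂ hl.2 fun S hS hSN =>
        hf (_ :: S) (by simpa using hS) (List.forall_mem_cons.2 ⟨hl.1, hSN⟩), add_zero]

/-- Only the full subsequence contributes the top value of `f`. -/
lemma firstBlockSum_append_singleton (hE : IsCondExp ι E) {N : Set M} {L : List (M × B)}
    (hL : ∀ p ∈ L, p.1 ∈ N) {n : M} (hn : n ∈ N) {f : List (M × B) → M → B}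
    (hf : ∀ S : List (M × B), S.length < L.length → (∀ p ∈ S, p.1 ∈ N) → ∀ m ∈ N, f S m = 0) :
    firstBlockSum E (toWord ι (L ++ [(n, 1)])) f = f L n := by
  induction L generalizing f with
  | nil => simp [toWord, firstBlockSum, hE.1]
  | cons p L ih =>
    rw [List.forall_mem_cons] at hL
    have hskip (g : M) (l : List (M × M)) (hl : ∀ q ∈ l, q.1 ∈ N) (hk : l.length ≤ L.length) :
        firstBlockSum E ((p.1, g) :: l) f = 0 :=
      firstBlockSum_eq_zero (List.forall_mem_cons.2 ⟨hL.1, hl⟩)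
        fun S hS => hf S (hS.trans_le (by simpa using hk))
    have hrest := ih hL.2 (f := fun S => f (p :: S)) fun S hS hSN =>
      hf (p :: S) (by simpa using hS) (List.forall_mem_cons.2 ⟨hL.1, hSN⟩)
    obtain - | ⟨q, L⟩ := L
    · simpa [toWord, firstBlockSum, hskip, hE.map_apply] using hrest
    · have hl : ∀ q ∈ toWord ι (L ++ [(n, 1)]), q.1 ∈ N := by
        simp only [toWord, List.forall_mem_map, List.forall_mem_append]
        exact ⟨fun q hq => hL.2 q (by simp [hq]), by simpa using hn⟩
      change firstBlockSum E ((p.1, ι p.2) :: (q.1, ι q.2) :: toWord ι (L ++ [(n, 1)])) f = _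
      rw [firstBlockSum, hskip _ _ hl (by simp [toWord]), zero_add, hE.map_apply]
      exact hrest

/-- The values of `f` are recovered recursively from its first block sums. -/
lemma eq_of_firstBlockSum_eq (hE : IsCondExp ι E) {N : Set M} {f f' : List (M × B) → M → B}
    (h : ∀ L : List (M × B), (∀ p ∈ L, p.1 ∈ N) →
      firstBlockSum E (toWord ι L) f = firstBlockSum E (toWord ι L) f')
    {L : List (M × B)} (hL : ∀ p ∈ L, p.1 ∈ N) {n : M} (hn : n ∈ N) : f L n = f' L n := by
  induction hk : L.length using Nat.strong_induction_on generalizing L n with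
  | _ k ih =>
    have htop := firstBlockSum_append_singleton hE hL hn (f := f - f') fun S hS hSN m hm =>
      sub_eq_zero.2 (ih _ (hk ▸ hS) hSN hm rfl)
    have hsum := h (L ++ [(n, 1)]) (by simpa [or_imp, forall_and, hn] using hL)
    rw [← sub_add_cancel f f', firstBlockSum_add, add_eq_right, htop] at hsum
    exact sub_eq_zero.1 hsum

end FirstBlockSum

/-! ### Freeness and centered words -/

/-- `F` is a conditional expectation of `B` onto its subalgebra `D`. -/
structure IsCondExpOnto {B : Type*} [Ring B] [Algebra ℂ B] (D : Subalgebra ℂ B) (F : B →ₗ[ℂ] B) :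
    Prop where
  mem (b : B) : F b ∈ D
  map_of_mem {d : B} (hd : d ∈ D) : F d = d
  map_bimod {d d' : B} (hd : d ∈ D) (hd' : d' ∈ D) (b : B) : F (d * b * d') = d * F b * d'

namespace IsCondExpOnto

variable {B : Type*} [Ring B] [Algebra ℂ B] {D : Subalgebra ℂ B} {F : B →ₗ[ℂ] B}

lemma map_mul_left (hF : IsCondExpOnto D F) {d : B} (hd : d ∈ D) (b : B) : F (d * b) = d * F b := by
  simpa using hF.map_bimod hd D.one_mem b

lemma map_mul_right (hF : IsCondExpOnto D F) {d : B} (hd : d ∈ D) (b : B) :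
    F (b * d) = F b * d := by
  simpa using hF.map_bimod D.one_mem hd b

lemma map_sub_map (hF : IsCondExpOnto D F) (b : B) : F (b - F b) = 0 := by
  rw [map_sub, hF.map_of_mem (hF.mem b), sub_self]

end IsCondExpOnto

section Freeness

variable {B M : Type*} [Ring B] [Algebra ℂ B] [Ring M] [Algebra ℂ M]
variable {ι : B →ₐ[ℂ] M} {E : M →ₗ[ℂ] B} {F : B →ₗ[ℂ] B} {D : Subalgebra ℂ B} {N : Subalgebra ℂ M}

variable (E F N) in
/-- All the letters `n₁, b₁, n₂, b₂, …` of the word are centered with respect to `F ∘ E` on `N` and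
`F` on `B`. -/
def IsCentered (L : List (M × B)) : Prop :=
  ∀ p ∈ L, p.1 ∈ N ∧ F (E p.1) = 0 ∧ F p.2 = 0

lemma isCentered_nil : IsCentered E F N [] := by
  simp [IsCentered]

lemma isCentered_cons {p : M × B} {L : List (M × B)} :
    IsCentered E F N (p :: L) ↔ (p.1 ∈ N ∧ F (E p.1) = 0 ∧ F p.2 = 0) ∧ IsCentered E F N L :=
  List.forall_mem_cons

lemma isCentered_append {L L' : List (M × B)} :
    IsCentered E F N (L ++ L') ↔ IsCentered E F N L ∧ IsCentered E F N L' :=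
  List.forall_mem_append

variable (ι E F N) in
/-- The alternating words of centered elements that begin and end in `N` have expectation zero, with
values in `B` rather than only in `D`. -/
def CenteredWordsVanish : Prop :=
  ∀ L : List (M × B), IsCentered E F N L → ∀ n ∈ N, F (E n) = 0 → E (wordProd (toWord ι L) * n) = 0

lemma IsCondExp.map_wordProd_concat (hE : IsCondExp ι E) (L : List (M × B)) (p : M × B) :
    E (wordProd (toWord ι (L ++ [p]))) = E (wordProd (toWord ι L) * p.1) * p.2 := by
  simp only [toWord_append, wordProd_append, toWord_cons, toWord_nil, wordProd_cons, wordProd_nil,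
    mul_one, ← mul_assoc, hE.map_mul_right]

lemma CenteredWordsVanish.map_wordProd (h : CenteredWordsVanish ι E F N) (hE : IsCondExp ι E)
    {L : List (M × B)} (hL : L ≠ []) (hc : IsCentered E F N L) : E (wordProd (toWord ι L)) = 0 := by
  obtain ⟨L, p, rfl⟩ := (List.eq_nil_or_concat' L).resolve_left hL
  obtain ⟨hc, hp⟩ := isCentered_append.1 hc
  obtain ⟨hpN, hpE, -⟩ := hp p (by simp)
  rw [hE.map_wordProd_concat, h L hc p.1 hpN hpE, zero_mul]

lemma CenteredWordsVanish.map_wordProd_mul_alternating (h : CenteredWordsVanish ι E F N)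
    (hE : IsCondExp ι E) : ∀ (l : List (M × Bool)) (L : List (M × B)), IsCentered E F N L →
      L ≠ [] ∨ l ≠ [] → (∀ p ∈ l.head?, p.2 = true) → l.IsChain (fun p q => p.2 ≠ q.2) →
      (∀ p ∈ l, p.1 ∈ (if p.2 then N else ι.range) ∧ F (E p.1) = 0) →
      E (wordProd (toWord ι L) * (l.map Prod.fst).prod) = 0
  | [], L, hL, hne, _, _, _ => by
    simpa using h.map_wordProd hE (by simpa using hne) hL
  | [(n, s)], L, hL, _, hs, _, hl => by
    obtain rfl : s = true := by simpa using hs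
    have hn := hl (n, true) (by simp)
    simpa using h L hL n hn.1 hn.2
  | (n, s) :: (m, s') :: l, L, hL, _, hs, hch, hl => by
    obtain rfl : s = true := by simpa using hs
    obtain ⟨hss', htail⟩ := List.isChain_cons_cons.1 hch
    obtain rfl : s' = false := by simpa using hss'.symm
    obtain ⟨hhead, hchl⟩ := List.isChain_cons.1 htail
    obtain ⟨hn, hm⟩ := List.forall_mem_cons.1 hl
    obtain ⟨⟨⟨b, rfl⟩, hb⟩, hll⟩ := List.forall_mem_cons.1 hm
    have hc : IsCentered E F N (L ++ [(n, b)]) := by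
      rw [isCentered_append, isCentered_cons]
      exact ⟨hL, ⟨hn.1, hn.2, by simpa [hE.map_apply] using hb⟩, isCentered_nil⟩
    have ih := h.map_wordProd_mul_alternating hE l (L ++ [(n, b)]) hc (by simp)
      (fun p hp => by simpa using (hhead p hp).symm) hchl hll
    simpa [toWord_append, toWord_cons, toWord_nil, wordProd_append, wordProd_cons, wordProd_nil,
      mul_assoc] using ih

theorem CenteredWordsVanish.freeWithAmalgamation (h : CenteredWordsVanish ι E F N)
    (hE : IsCondExp ι E) : FreeWithAmalgamation (fun m => F (E m)) N ι.range := by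
  rintro (- | ⟨⟨m, s⟩, l⟩) hne hch hl
  · exact absurd rfl hne
  have hmap := fun l => h.map_wordProd_mul_alternating hE l [] isCentered_nil
  simp only [toWord_nil, wordProd_nil, one_mul] at hmap
  obtain - | - := s
  · obtain ⟨hm, hll⟩ := List.forall_mem_cons.1 hl
    obtain ⟨b, rfl : ι b = m⟩ := hm.1
    obtain rfl | hne := eq_or_ne l []
    · simpa using hm.2
    · obtain ⟨hhead, hchl⟩ := List.isChain_cons.1 hch
      have hzero := hmap l (.inr hne) (fun p hp => by simpa using (hhead p hp).symm) hchl hll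
      simp [hE.map_mul_left, hzero]
  · simp only [hmap _ (.inr hne) (by simp) hch hl, map_zero]

variable (ι) in
/-- The alternating word `n₁, ι b₁, n₂, ι b₂, …`, its letters tagged by the algebra they belong
to. -/
def alternatingWord (L : List (M × B)) : List (M × Bool) :=
  L.flatMap fun p => [(p.1, true), (ι p.2, false)]

lemma isChain_cons_alternatingWord_append (L : List (M × B)) {r : List (M × Bool)}
    (hr : ∀ p ∈ r.head?, p.2 = true) (hch : r.IsChain fun p q => p.2 ≠ q.2) (m : M) :
    ((m, false) :: (alternatingWord ι L ++ r)).IsChain fun p q => p.2 ≠ q.2 := by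
  induction L generalizing m with
  | nil => exact List.isChain_cons.2 ⟨fun p hp => by simp [hr p hp], hch⟩
  | cons p L ih => simpa [alternatingWord] using ih (ι p.2)

lemma prod_alternatingWord (L : List (M × B)) :
    ((alternatingWord ι L).map Prod.fst).prod = wordProd (toWord ι L) := by
  induction L with
  | nil => rfl
  | cons p L ih =>
    simpa [alternatingWord, toWord_cons, wordProd_cons, mul_assoc] using
      congrArg (p.1 * ι p.2 * ·) ih

lemma FreeWithAmalgamation.map_wordProd_mul (h : FreeWithAmalgamation (fun m => F (E m)) N ι.range)
    (hE : IsCondExp ι E) {L : List (M × B)} (hL : IsCentered E F N L) {r : List (M × Bool)}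
    (hne : L ≠ [] ∨ r ≠ []) (hr : ∀ p ∈ r.head?, p.2 = true) (hch : r.IsChain fun p q => p.2 ≠ q.2)
    (hmem : ∀ p ∈ r, p.1 ∈ (if p.2 then N else ι.range) ∧ F (E p.1) = 0) :
    F (E (wordProd (toWord ι L) * (r.map Prod.fst).prod)) = 0 := by
  rw [← prod_alternatingWord, ← List.prod_append, ← List.map_append]
  refine h _ ?_ (isChain_cons_alternatingWord_append L hr hch 0).tail ?_
  · cases L <;> simp_all [alternatingWord]
  · simp only [List.forall_mem_append, alternatingWord, List.forall_mem_flatMap]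
    refine ⟨fun p hp => ?_, hmem⟩
    simpa [hE.map_apply, and_assoc] using hL p hp

/-- Freeness only controls `F ∘ E`, but a centered word followed by any letter of `B` is again
controlled by freeness, so faithfulness of `F` applies. -/
theorem FreeWithAmalgamation.centeredWordsVanish
    (h : FreeWithAmalgamation (fun m => F (E m)) N ι.range) (hE : IsCondExp ι E)
    (hF : IsCondExpOnto D F) (hfaithful : ∀ b₁ : B, (∀ b₂ : B, F (b₁ * b₂) = 0) → b₁ = 0) :
    CenteredWordsVanish ι E F N := by
  intro L hL n hn hnE
  refine hfaithful _ fun b => ?_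
  have hF_mul : F (E (wordProd (toWord ι L) * n) * F b) = 0 := by
    rw [hF.map_mul_right (hF.mem b)]
    have := h.map_wordProd_mul hE hL (r := [(n, true)]) (by simp) (by simp) (by simp)
      (by simpa using ⟨hn, hnE⟩)
    simp only [List.map_cons, List.map_nil, List.prod_singleton] at this
    rw [this, zero_mul]
  have hsub_mul : F (E (wordProd (toWord ι L) * n) * (b - F b)) = 0 := by
    have := h.map_wordProd_mul hE (L := L ++ [(n, b - F b)]) (r := []) ?_ (by simp) (by simp)
      (by simp) (by simp)
    · simpa [toWord_append, toWord_cons, toWord_nil, wordProd_append, wordProd_cons, wordProd_nil,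
        ← mul_assoc, ← hE.map_mul_right] using this
    · simpa [isCentered_append, isCentered_cons, isCentered_nil, hF.map_sub_map] using
        ⟨hL, hn, hnE⟩
  rwa [mul_sub, map_sub, hF_mul, sub_zero] at hsub_mul

end Freeness

/-! ### Factorization through `F` kills centered words -/

section Factorization

variable {B M : Type*} [Ring B] [Algebra ℂ B] [Ring M] [Algebra ℂ M]
variable {ι : B →ₐ[ℂ] M} {E : M →ₗ[ℂ] B} {F : B →ₗ[ℂ] B} {D : Subalgebra ℂ B} {N : Subalgebra ℂ M}
variable {κ : MultiplicativeMap ι}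

/-- `F {n₁ F(b₁), …, n_k F(b_k), n}`, where `L` is the list of the pairs `(n_j, b_j)`. -/
def condCumulant (κ : MultiplicativeMap ι) (F : B →ₗ[ℂ] B) : List (M × B) → M → B := fun L n =>
  F (pairCumulant κ (L.map (Prod.map id F)) n)

/-- The cumulants of `N` factor through `F`: the condition on the `R`-transform in the
characterization of freeness. -/
def CumulantsFactor (κ : MultiplicativeMap ι) (F : B →ₗ[ℂ] B) (N : Subalgebra ℂ M) : Prop :=
  ∀ L : List (M × B), (∀ p ∈ L, p.1 ∈ N) → ∀ n ∈ N, pairCumulant κ L n = condCumulant κ F L n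

lemma MultiplicativeMap.toFun_append_zero (κ : MultiplicativeMap ι) (pre post : List M) :
    κ.toFun (pre ++ 0 :: post) = 0 := by
  simpa using κ.map_smul pre 0 0 post

lemma condCumulant_add (S : List (M × B)) (x : M) (c c' : B) (S' : List (M × B)) (n : M) :
    condCumulant κ F (S ++ (x, c + c') :: S') n =
      condCumulant κ F (S ++ (x, c) :: S') n + condCumulant κ F (S ++ (x, c') :: S') n := by
  simp [condCumulant, pairCumulant, mul_add, κ.map_add]

lemma condCumulant_eq_zero {c : B} (hc : F c = 0) (S : List (M × B)) (x : M) (S' : List (M × B))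
    (n : M) : condCumulant κ F (S ++ (x, c) :: S') n = 0 := by
  simp [condCumulant, pairCumulant, hc, κ.toFun_append_zero]

/-- Every block containing the first letter and another one has a centered gap, so the first letter
is a block of its own. -/
lemma CumulantsFactor.map_wordProd_cons_mul (h : CumulantsFactor κ F N) (hE : IsCondExp ι E)
    (hκ : IsCumulantMap ι E κ) {p : M × B} (hp : p.1 ∈ N) {L : List (M × B)}
    (hL : ∀ q ∈ L, q.1 ∈ N) {n : M} (hn : n ∈ N) (hzero : E (wordProd (toWord ι L) * n) = 0)
    (hgap : ∀ R L', R ++ L' = L → F (E (ι p.2 * wordProd (toWord ι R))) = 0) :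
    E (wordProd (toWord ι (p :: L)) * n) = 0 := by
  have hword : E (wordProd (toWord ι (p :: L)) * n) =
      E (wordProd (toWord ι (p :: L ++ [(n, 1)]))) := by
    rw [hE.map_wordProd_concat, mul_one]
  rw [hword, expectation_wordProd_eq_firstBlockSum hE hκ (by simp), List.cons_append, toWord_cons,
    firstBlockSum_cons_eq_splitSum, hE.map_mul_left, hE.map_wordProd_concat, hzero, zero_mul,
    mul_zero, mul_zero, zero_add, toWord, splitSum_map]
  refine splitSum_eq_zero fun R q l' hR => ?_
  have hmem : ∀ r ∈ R ++ q :: l', r.1 ∈ N := by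
    simpa [hR, or_imp, forall_and, hn] using fun a b hab => hL (a, b) hab
  refine firstBlockSum_eq_zero (N := N) ?_ fun S _ hS m hm => ?_
  · exact List.forall_mem_cons.2
      ⟨hmem q (by simp), List.forall_mem_map.2 fun r hr => hmem r (by simp [hr])⟩
  · have hRL : R ++ (q :: l').dropLast = L := by
      rw [← List.dropLast_append_of_ne_nil (List.cons_ne_nil _ _), hR, List.dropLast_concat]
    exact (h ((p.1, E _) :: S) (List.forall_mem_cons.2 ⟨hp, hS⟩) m hm).trans
      (condCumulant_eq_zero (hgap R _ hRL) [] p.1 S m)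

theorem CumulantsFactor.centeredWordsVanish (h : CumulantsFactor κ F N) (hE : IsCondExp ι E)
    (hκ : IsCumulantMap ι E κ) : CenteredWordsVanish ι E F N := by
  intro L hL n hn hnE
  induction hk : L.length using Nat.strong_induction_on generalizing L n with
  | _ k ih =>
    obtain - | ⟨p, L⟩ := L
    · rw [toWord_nil, wordProd_nil, one_mul, expectation_eq_pairCumulant_nil hE hκ,
        h [] (by simp) n hn, condCumulant, List.map_nil, ← expectation_eq_pairCumulant_nil hE hκ,
        hnE]
    obtain ⟨⟨hp, -, hpF⟩, hL⟩ := isCentered_cons.1 hL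
    refine h.map_wordProd_cons_mul hE hκ hp (fun q hq => (hL q hq).1) hn
      (ih L.length (by simp [← hk]) L hL n hn hnE rfl) fun R L' hRL => ?_
    obtain rfl | ⟨R, r, rfl⟩ := List.eq_nil_or_concat' R
    · simpa [toWord_nil, wordProd_nil, hE.map_apply] using hpF
    · rw [← hRL, isCentered_append, isCentered_append] at hL
      obtain ⟨hr, hrE, -⟩ := hL.1.2 r (by simp)
      rw [hE.map_mul_left, hE.map_wordProd_concat,
        ih R.length (by simp [← hk, ← hRL]) R hL.1.1 r.1 hr hrE rfl, zero_mul, mul_zero, map_zero]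

end Factorization

/-! ### Vanishing of centered words forces factorization -/

section GapSpace

variable {B M : Type*} [Ring B] [Algebra ℂ B] [Ring M] [Algebra ℂ M]
variable {ι : B →ₐ[ℂ] M} {E : M →ₗ[ℂ] B} {F : B →ₗ[ℂ] B} {D : Subalgebra ℂ B} {N : Subalgebra ℂ M}

variable (ι E F N) in
/-- The span of the products `b₀ n₁ b₁ ⋯ n_k b_k P` of centered elements `n_j` of `N` and `b_j` of
`B`, followed by an arbitrary element `P` of `N`. -/
def gapSpace : Submodule ℂ M :=
  Submodule.span ℂ {Z | ∃ (b : B) (L : List (M × B)) (P : M), F b = 0 ∧ IsCentered E F N L ∧ P ∈ N ∧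
    ι b * wordProd (toWord ι L) * P = Z}

lemma mul_mem_gapSpace {b : B} (hb : F b = 0) {L : List (M × B)} (hL : IsCentered E F N L) {P : M}
    (hP : P ∈ N) : ι b * wordProd (toWord ι L) * P ∈ gapSpace ι E F N :=
  Submodule.subset_span ⟨b, L, P, hb, hL, hP, rfl⟩

lemma map_mem_gapSpace {b : B} (hb : F b = 0) : ι b ∈ gapSpace ι E F N := by
  simpa [toWord_nil, wordProd_nil] using mul_mem_gapSpace hb isCentered_nil N.one_mem

lemma map_mem_sup_gapSpace (hF : IsCondExpOnto D F) (b : B) :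
    ι b ∈ Subalgebra.toSubmodule (D.map ι) ⊔ gapSpace ι E F N := by
  rw [← add_sub_cancel (F b) b, map_add]
  exact Submodule.add_mem_sup (Subalgebra.mem_map.2 ⟨_, hF.mem b, rfl⟩)
    (map_mem_gapSpace (hF.map_sub_map b))

lemma sub_map_centered (hE : IsCondExp ι E) (hF : IsCondExpOnto D F) (hDN : ∀ d ∈ D, ι d ∈ N)
    {P : M} (hP : P ∈ N) : P - ι (F (E P)) ∈ N ∧ F (E (P - ι (F (E P)))) = 0 :=
  ⟨N.sub_mem hP (hDN _ (hF.mem _)), by rw [map_sub, hE.map_apply, hF.map_sub_map]⟩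

/-- Centering both `P` and `c` leaves only one product that is not visibly in the space. -/
lemma mul_map_mem_sup_gapSpace_of_mem (hE : IsCondExp ι E) (hF : IsCondExpOnto D F)
    (hDN : ∀ d ∈ D, ι d ∈ N) {b : B} (hb : F b = 0) {L : List (M × B)}
    (hL : IsCentered E F N L) {P : M} (hP : P ∈ N) {c : B}
    (h : ι b * wordProd (toWord ι L) * ι (F (E P) * (c - F c)) ∈
      Subalgebra.toSubmodule (D.map ι) ⊔ gapSpace ι E F N) :
    ι b * wordProd (toWord ι L) * P * ι c ∈
      Subalgebra.toSubmodule (D.map ι) ⊔ gapSpace ι E F N := by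
  obtain ⟨hmem, hzero⟩ := sub_map_centered hE hF hDN hP
  have hsplit : ι b * wordProd (toWord ι L) * P * ι c =
      ι b * wordProd (toWord ι L) * (P * ι (F c)) +
        ι b * wordProd (toWord ι (L ++ [(P - ι (F (E P)), c - F c)])) * 1 +
        ι b * wordProd (toWord ι L) * ι (F (E P) * (c - F c)) := by
    simp only [toWord_append, wordProd_append, toWord_cons, toWord_nil, wordProd_cons,
      wordProd_nil, map_sub, map_mul]
    noncomm_ring
  have hL' : IsCentered E F N (L ++ [(P - ι (F (E P)), c - F c)]) :=
    isCentered_append.2 ⟨hL, isCentered_cons.2 ⟨⟨hmem, hzero, hF.map_sub_map c⟩, isCentered_nil⟩⟩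
  rw [hsplit]
  refine add_mem (Submodule.mem_sup_right (add_mem ?_ ?_)) h
  · exact mul_mem_gapSpace hb hL (N.mul_mem hP (hDN _ (hF.mem c)))
  · exact mul_mem_gapSpace hb hL' N.one_mem

lemma mul_map_mem_sup_gapSpace (hE : IsCondExp ι E) (hF : IsCondExpOnto D F)
    (hDN : ∀ d ∈ D, ι d ∈ N) {b : B} (hb : F b = 0) {L : List (M × B)}
    (hL : IsCentered E F N L) {P : M} (hP : P ∈ N) (c : B) :
    ι b * wordProd (toWord ι L) * P * ι c ∈
      Subalgebra.toSubmodule (D.map ι) ⊔ gapSpace ι E F N := by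
  refine mul_map_mem_sup_gapSpace_of_mem hE hF hDN hb hL hP ?_
  induction L using List.reverseRecOn generalizing P c with
  | nil =>
    rw [toWord_nil, wordProd_nil, mul_one, ← map_mul]
    exact map_mem_sup_gapSpace hF _
  | append_singleton L p ih =>
    obtain ⟨hL, hp⟩ := isCentered_append.1 hL
    have hpN : p.1 ∈ N := (hp p (by simp)).1
    have := mul_map_mem_sup_gapSpace_of_mem hE hF hDN hb hL hpN
      (ih hL hpN (p.2 * (F (E P) * (c - F c))))
    simpa only [toWord_append, wordProd_append, toWord_cons, toWord_nil, wordProd_cons,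
      wordProd_nil, mul_one, map_mul, mul_assoc] using this

lemma mul_mem_sup_gapSpace (hE : IsCondExp ι E) (hF : IsCondExpOnto D F)
    (hDN : ∀ d ∈ D, ι d ∈ N) {Z : M} (hZ : Z ∈ gapSpace ι E F N) {m : M} (hm : m ∈ N) (c : B) :
    Z * m * ι c ∈ Subalgebra.toSubmodule (D.map ι) ⊔ gapSpace ι E F N := by
  induction hZ using Submodule.span_induction with
  | mem Z hZ =>
    obtain ⟨b, L, P, hb, hL, hP, rfl⟩ := hZ
    simpa only [mul_assoc] using mul_map_mem_sup_gapSpace hE hF hDN hb hL (N.mul_mem hP hm) c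
  | zero => simp
  | add Z Z' _ _ ih ih' => simpa only [add_mul] using add_mem ih ih'
  | smul a Z _ ih => simpa only [smul_mul_assoc] using Submodule.smul_mem _ a ih

namespace CenteredWordsVanish

lemma expectation_mem (h : CenteredWordsVanish ι E F N) (hE : IsCondExp ι E)
    (hF : IsCondExpOnto D F) (hDN : ∀ d ∈ D, ι d ∈ N) {n : M} (hn : n ∈ N) : E n ∈ D := by
  obtain ⟨hmem, hzero⟩ := sub_map_centered hE hF hDN hn
  have := h [] isCentered_nil _ hmem hzero
  rw [toWord_nil, wordProd_nil, one_mul, map_sub, hE.map_apply, sub_eq_zero] at this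
  exact this ▸ hF.mem _

lemma map_wordProd_mul (h : CenteredWordsVanish ι E F N) (hE : IsCondExp ι E)
    (hF : IsCondExpOnto D F) (hDN : ∀ d ∈ D, ι d ∈ N) {L : List (M × B)} (hne : L ≠ [])
    (hL : IsCentered E F N L) {P : M} (hP : P ∈ N) : E (wordProd (toWord ι L) * P) = 0 := by
  obtain ⟨hmem, hzero⟩ := sub_map_centered hE hF hDN hP
  rw [← sub_add_cancel P (ι (F (E P))), mul_add, map_add, h L hL _ hmem hzero, hE.map_mul_right,
    h.map_wordProd hE hne hL, zero_mul, add_zero]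

lemma map_of_mem_gapSpace (h : CenteredWordsVanish ι E F N) (hE : IsCondExp ι E)
    (hF : IsCondExpOnto D F) (hDN : ∀ d ∈ D, ι d ∈ N) {Z : M} (hZ : Z ∈ gapSpace ι E F N) :
    F (E Z) = 0 := by
  induction hZ using Submodule.span_induction with
  | mem Z hZ =>
    obtain ⟨b, L, P, hb, hL, hP, rfl⟩ := hZ
    rw [mul_assoc, hE.map_mul_left]
    obtain rfl | hne := eq_or_ne L []
    · rw [toWord_nil, wordProd_nil, one_mul, hF.map_mul_right (h.expectation_mem hE hF hDN hP), hb,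
        zero_mul]
    · rw [h.map_wordProd_mul hE hF hDN hne hL hP, mul_zero, map_zero]
  | zero => simp
  | add Z Z' _ _ ih ih' => rw [map_add, map_add, ih, ih', add_zero]
  | smul a Z _ ih => rw [map_smul, map_smul, ih, smul_zero]

lemma map_mul_of_mem_gapSpace (h : CenteredWordsVanish ι E F N) (hE : IsCondExp ι E)
    (hF : IsCondExpOnto D F) (hDN : ∀ d ∈ D, ι d ∈ N) {Z : M} (hZ : Z ∈ gapSpace ι E F N) {n : M}
    (hn : n ∈ N) : E (n * Z) = E n * E Z := by
  induction hZ using Submodule.span_induction with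
  | mem Z hZ =>
    obtain ⟨b, L, P, hb, hL, hP, rfl⟩ := hZ
    obtain ⟨hmem, hzero⟩ := sub_map_centered hE hF hDN hn
    have hcons := h.map_wordProd_mul hE hF hDN (L := (n - ι (F (E n)), b) :: L) (by simp)
      (isCentered_cons.2 ⟨⟨hmem, hzero, hb⟩, hL⟩) hP
    rw [hF.map_of_mem (h.expectation_mem hE hF hDN hn), toWord_cons, wordProd_cons, sub_mul,
      sub_mul, sub_mul, map_sub, sub_eq_zero] at hcons
    simpa only [mul_assoc, hE.map_mul_left] using hcons
  | zero => simp
  | add Z Z' _ _ ih ih' => rw [mul_add, map_add, map_add, mul_add, ih, ih']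
  | smul a Z _ ih => rw [mul_smul_comm, map_smul, map_smul, mul_smul_comm, ih]

lemma map_mul_eq_zero_of_mem_gapSpace (h : CenteredWordsVanish ι E F N) (hE : IsCondExp ι E)
    (hF : IsCondExpOnto D F) (hDN : ∀ d ∈ D, ι d ∈ N) {Z : M} (hZ : Z ∈ gapSpace ι E F N) {n : M}
    (hn : n ∈ N) : F (E (n * Z)) = 0 := by
  rw [h.map_mul_of_mem_gapSpace hE hF hDN hZ hn, hF.map_mul_left (h.expectation_mem hE hF hDN hn),
    h.map_of_mem_gapSpace hE hF hDN hZ, mul_zero]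

end CenteredWordsVanish

end GapSpace

section Merging

variable {B M : Type*} [Ring B] [Algebra ℂ B] [Ring M] [Algebra ℂ M]
variable {ι : B →ₐ[ℂ] M} {E : M →ₗ[ℂ] B} {F : B →ₗ[ℂ] B} {D : Subalgebra ℂ B} {N : Subalgebra ℂ M}

lemma firstBlockSum_gap_add {f : List (M × B) → M → B}
    (hf : ∀ S x c c' S' n,
      f (S ++ (x, c + c') :: S') n = f (S ++ (x, c) :: S') n + f (S ++ (x, c') :: S') n)
    (pre : List (M × M)) (n Y Y' : M) (l : List (M × M)) :
    firstBlockSum E (pre ++ (n, Y + Y') :: l) f =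
      firstBlockSum E (pre ++ (n, Y) :: l) f + firstBlockSum E (pre ++ (n, Y') :: l) f := by
  have hbase (f : List (M × B) → M → B)
      (hf : ∀ x c c' S n, f ((x, c + c') :: S) n = f ((x, c) :: S) n + f ((x, c') :: S) n)
      (n Y Y' : M) : firstBlockSum E ((n, Y + Y') :: l) f =
        firstBlockSum E ((n, Y) :: l) f + firstBlockSum E ((n, Y') :: l) f := by
    induction l generalizing n Y Y' with
    | nil => simp [firstBlockSum, mul_add]
    | cons q l ih =>
      have hadd : (fun S => f ((n, E (Y + Y')) :: S)) =
          (fun S => f ((n, E Y) :: S)) + fun S => f ((n, E Y') :: S) := by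
        ext S m
        simp [hf]
      simp only [firstBlockSum, add_mul, ih, hadd, firstBlockSum_add, add_add_add_comm]
  fun_induction firstBlockSum E pre f with
  | case1 f => exact hbase f (fun x c c' => hf [] x c c') n Y Y'
  | case2 p f =>
    simp only [List.cons_append, List.nil_append, firstBlockSum, mul_add,
      hbase f (fun x c c' => hf [] x c c'), hbase (fun S => f ((p.1, E p.2) :: S))
        (fun x c c' => hf [(p.1, E p.2)] x c c'), add_add_add_comm]
  | case3 p q pre f ih₁ ih₂ =>
    simp only [List.cons_append, firstBlockSum] at ih₁ ih₂ ⊢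
    rw [ih₁ hf, ih₂ fun S => hf (_ :: S), add_add_add_comm]

/-- A gap whose products with `N` are all centered cannot be a gap of the first block, so it may be
absorbed together with the letters `m` and `h` that follow it. -/
lemma firstBlockSum_merge {f : List (M × B) → M → B}
    (hf : ∀ S x c S' n, F c = 0 → f (S ++ (x, c) :: S') n = 0) {Y : M}
    (hY : ∀ n ∈ N, F (E (n * Y)) = 0) {pre : List (M × M)} (hpre : ∀ p ∈ pre, p.1 ∈ N ∧ p.2 ∈ N)
    {n : M} (hn : n ∈ N) (m h : M) (l : List (M × M)) :
    firstBlockSum E (pre ++ (n, Y) :: (m, h) :: l) f =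
      firstBlockSum E (pre ++ (n, Y * m * h) :: l) f := by
  have hbase (f : List (M × B) → M → B) (hf : ∀ x c S n, F c = 0 → f ((x, c) :: S) n = 0) {Y : M}
      (hY : F (E Y) = 0) (n : M) : firstBlockSum E ((n, Y) :: (m, h) :: l) f =
        firstBlockSum E ((n, Y * m * h) :: l) f := by
    rw [firstBlockSum, add_eq_left]
    exact firstBlockSum_eq_zero (N := Set.univ) (by simp) fun S _ _ m _ => hf n (E Y) S m hY
  have hY₁ : F (E Y) = 0 := by simpa using hY 1 N.one_mem
  fun_induction firstBlockSum E pre f with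
  | case1 f => exact hbase f (fun x c => hf [] x c) hY₁ n
  | case2 p f =>
    have hpY : F (E (p.2 * n * Y)) = 0 := hY _ (N.mul_mem (hpre p (by simp)).2 hn)
    have hskip := hbase f (fun x c => hf [] x c) hpY p.1
    have hstep := hbase (fun S => f ((p.1, E p.2) :: S)) (fun x c => hf [(p.1, E p.2)] x c) hY₁ n
    rw [List.cons_append, List.nil_append, firstBlockSum, hskip, hstep, List.cons_append,
      List.nil_append, firstBlockSum]
    simp only [mul_assoc]
  | case3 p q pre f ih₁ ih₂ =>
    simp only [List.forall_mem_cons] at hpre ih₁ ih₂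
    obtain ⟨⟨hp₁, hp₂⟩, hq, hpre⟩ := hpre
    simp only [List.cons_append, firstBlockSum] at ih₁ ih₂ ⊢
    rw [ih₁ hf ⟨⟨hp₁, N.mul_mem (N.mul_mem hp₂ hq.1) hq.2⟩, hpre⟩,
      ih₂ (fun S => hf (_ :: S)) ⟨hq, hpre⟩]

lemma firstBlockSum_concat_mul {f : List (M × B) → M → B} {Z : M}
    (hZ : ∀ n ∈ N, E (n * Z) = E n * E Z) {pre : List (M × M)}
    (hpre : ∀ p ∈ pre, p.1 ∈ N ∧ p.2 ∈ N) {n : M} (hn : n ∈ N) :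
    firstBlockSum E (pre ++ [(n, Z)]) f = firstBlockSum E (pre ++ [(n, 1)]) f * E Z := by
  have hbase (f : List (M × B) → M → B) {h : M} (hh : h ∈ N) (n : M) :
      firstBlockSum E [(n, h * Z)] f = firstBlockSum E [(n, h)] f * E Z := by
    rw [firstBlockSum, firstBlockSum, hZ h hh, mul_assoc]
  fun_induction firstBlockSum E pre f with
  | case1 f => simpa using hbase f N.one_mem n
  | case2 p f =>
    have hskip := hbase f (N.mul_mem (hpre p (by simp)).2 hn) p.1
    have hstep := hbase (fun S => f ((p.1, E p.2) :: S)) N.one_mem n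
    rw [one_mul] at hstep
    rw [List.cons_append, List.nil_append, firstBlockSum, hskip, hstep]
    simp only [List.cons_append, List.nil_append, firstBlockSum, mul_one, add_mul]
  | case3 p q pre f ih₁ ih₂ =>
    simp only [List.forall_mem_cons] at hpre ih₁ ih₂
    obtain ⟨⟨hp₁, hp₂⟩, hq, hpre⟩ := hpre
    simp only [List.cons_append, firstBlockSum] at ih₁ ih₂ ⊢
    rw [ih₁ ⟨⟨hp₁, N.mul_mem (N.mul_mem hp₂ hq.1) hq.2⟩, hpre⟩, ih₂ ⟨hq, hpre⟩, add_mul]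

lemma firstBlockSum_eq_map (hF : IsCondExpOnto D F) (hED : ∀ n ∈ N, E n ∈ D)
    {f f' : List (M × B) → M → B}
    (hf : ∀ S : List (M × B), (∀ p ∈ S, p.2 ∈ D) → ∀ n, f S n = F (f' S n)) {l : List (M × M)}
    (hl : ∀ p ∈ l, p.1 ∈ N ∧ p.2 ∈ N) : firstBlockSum E l f = F (firstBlockSum E l f') := by
  fun_induction firstBlockSum E l f generalizing f' with
  | case1 => simp [firstBlockSum]
  | case2 p f =>
    rw [firstBlockSum, hF.map_mul_right (hED _ (hl p (by simp)).2), hf [] (by simp)]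
  | case3 p q l f ih₁ ih₂ =>
    simp only [List.forall_mem_cons] at hl ih₁ ih₂
    obtain ⟨⟨hp₁, hp₂⟩, hq, hl⟩ := hl
    rw [firstBlockSum, map_add, ih₁ hf ⟨⟨hp₁, N.mul_mem (N.mul_mem hp₂ hq.1) hq.2⟩, hl⟩,
      ih₂ (fun S hS => hf (_ :: S) (List.forall_mem_cons.2 ⟨hED _ hp₂, hS⟩)) ⟨hq, hl⟩]

end Merging

section MomentsFactor

variable {B M : Type*} [Ring B] [Algebra ℂ B] [Ring M] [Algebra ℂ M]
variable {ι : B →ₐ[ℂ] M} {E : M →ₗ[ℂ] B} {F : B →ₗ[ℂ] B} {D : Subalgebra ℂ B} {N : Subalgebra ℂ M}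
variable {κ : MultiplicativeMap ι}

lemma toWord_mem (hDN : ∀ d ∈ D, ι d ∈ N) {L : List (M × B)}
    (hL : ∀ p ∈ L, p.1 ∈ N ∧ p.2 ∈ D) : ∀ p ∈ toWord ι L, p.1 ∈ N ∧ p.2 ∈ N :=
  List.forall_mem_map.2 fun p hp => ⟨(hL p hp).1, hDN _ (hL p hp).2⟩

namespace CenteredWordsVanish

lemma firstBlockSum_condCumulant_of_mem (h : CenteredWordsVanish ι E F N) (hE : IsCondExp ι E)
    (hF : IsCondExpOnto D F) (hDN : ∀ d ∈ D, ι d ∈ N) (hκ : IsCumulantMap ι E κ)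
    {L : List (M × B)} (hne : L ≠ []) (hL : ∀ p ∈ L, p.1 ∈ N ∧ p.2 ∈ D) :
    firstBlockSum E (toWord ι L) (condCumulant κ F) = E (wordProd (toWord ι L)) := by
  have hword := toWord_mem hDN hL
  have hmap := firstBlockSum_eq_map hF (fun n => h.expectation_mem hE hF hDN)
    (f := condCumulant κ F) (f' := pairCumulant κ) (fun S hS n => ?_) hword
  · rw [hmap, ← expectation_wordProd_eq_firstBlockSum hE hκ hne,
      hF.map_of_mem (h.expectation_mem hE hF hDN (wordProd_mem hword))]
  · have hid : S.map (Prod.map id F) = S.map id :=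
      List.map_congr_left fun p hp => Prod.ext rfl (hF.map_of_mem (hS p hp))
    rw [condCumulant, hid, List.map_id]

lemma firstBlockSum_condCumulant_concat (h : CenteredWordsVanish ι E F N) (hE : IsCondExp ι E)
    (hF : IsCondExpOnto D F) (hDN : ∀ d ∈ D, ι d ∈ N) (hκ : IsCumulantMap ι E κ)
    {pre : List (M × B)} (hpre : ∀ p ∈ pre, p.1 ∈ N ∧ p.2 ∈ D) {n : M} (hn : n ∈ N) {Z : M}
    (hZ : Z ∈ gapSpace ι E F N) :
    firstBlockSum E (toWord ι pre ++ [(n, Z)]) (condCumulant κ F) =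
      E (wordProd (toWord ι pre ++ [(n, Z)])) := by
  have hword := toWord_mem hDN hpre
  have hone := h.firstBlockSum_condCumulant_of_mem hE hF hDN hκ (L := pre ++ [(n, 1)]) (by simp)
    (List.forall_mem_append.2 ⟨hpre, by simpa using hn⟩)
  rw [toWord_append, toWord_cons, toWord_nil, map_one] at hone
  rw [firstBlockSum_concat_mul (fun m => h.map_mul_of_mem_gapSpace hE hF hDN hZ) hword hn, hone]
  simp only [wordProd_append, wordProd_cons, wordProd_nil, mul_one]
  rw [← h.map_mul_of_mem_gapSpace hE hF hDN hZ (N.mul_mem (wordProd_mem hword) hn), mul_assoc]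

/-- Reading the word from the left, every new gap is split into its part in `D`, which joins the
part `pre` already read, and a part that is centered against `N`, which absorbs the next letters. -/
theorem firstBlockSum_condCumulant_append (h : CenteredWordsVanish ι E F N) (hE : IsCondExp ι E)
    (hF : IsCondExpOnto D F) (hDN : ∀ d ∈ D, ι d ∈ N) (hκ : IsCumulantMap ι E κ)
    {pre : List (M × B)} (hpre : ∀ p ∈ pre, p.1 ∈ N ∧ p.2 ∈ D) {n : M} (hn : n ∈ N) {Y : M}
    (hY : Y ∈ Subalgebra.toSubmodule (D.map ι) ⊔ gapSpace ι E F N) {L : List (M × B)}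
    (hL : ∀ p ∈ L, p.1 ∈ N) :
    firstBlockSum E (toWord ι pre ++ (n, Y) :: toWord ι L) (condCumulant κ F) =
      E (wordProd (toWord ι pre ++ (n, Y) :: toWord ι L)) := by
  induction hk : L.length using Nat.strong_induction_on generalizing pre n Y L with
  | _ k ih =>
    obtain ⟨_, ⟨d, hd, rfl : ι d = _⟩, Z, hZ, rfl⟩ := Submodule.mem_sup.1 hY
    have hadd : wordProd (toWord ι pre ++ (n, ι d + Z) :: toWord ι L) =
        wordProd (toWord ι pre ++ (n, ι d) :: toWord ι L) +
          wordProd (toWord ι pre ++ (n, Z) :: toWord ι L) := by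
      simp only [wordProd_append, wordProd_cons, mul_add, add_mul]
    have hpre' : ∀ p ∈ pre ++ [(n, d)], p.1 ∈ N ∧ p.2 ∈ D :=
      List.forall_mem_append.2 ⟨hpre, by simpa using ⟨hn, hd⟩⟩
    rw [firstBlockSum_gap_add condCumulant_add, hadd, map_add]
    congr 1 <;> obtain - | ⟨p, L⟩ := L
    · simpa only [toWord_append, toWord_cons, toWord_nil] using
        h.firstBlockSum_condCumulant_of_mem hE hF hDN hκ (by simp) hpre'
    · obtain ⟨hp, hL⟩ := List.forall_mem_cons.1 hL
      simpa [toWord_append, toWord_cons, toWord_nil] using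
        ih L.length (by simp [← hk]) hpre' hp (map_mem_sup_gapSpace hF p.2) hL rfl
    · exact h.firstBlockSum_condCumulant_concat hE hF hDN hκ hpre hn hZ
    · obtain ⟨hp, hL⟩ := List.forall_mem_cons.1 hL
      rw [toWord_cons, firstBlockSum_merge (fun S x c S' n hc => condCumulant_eq_zero hc S x S' n)
        (fun m => h.map_mul_eq_zero_of_mem_gapSpace hE hF hDN hZ) (toWord_mem hDN hpre) hn,
        ih L.length (by simp [← hk]) hpre hn (mul_mem_sup_gapSpace hE hF hDN hZ hp p.2) hL rfl]
      simp only [wordProd_append, wordProd_cons, mul_assoc]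

theorem cumulantsFactor (h : CenteredWordsVanish ι E F N) (hE : IsCondExp ι E)
    (hF : IsCondExpOnto D F) (hDN : ∀ d ∈ D, ι d ∈ N) (hκ : IsCumulantMap ι E κ) :
    CumulantsFactor κ F N := by
  intro L hL n hn
  refine eq_of_firstBlockSum_eq hE (N := N) (fun L hL => ?_) hL hn
  obtain - | ⟨p, L⟩ := L
  · simp [toWord_nil, firstBlockSum]
  obtain ⟨hp, hL⟩ := List.forall_mem_cons.1 hL
  rw [← expectation_wordProd_eq_firstBlockSum hE hκ (by simp)]
  exact (h.firstBlockSum_condCumulant_append hE hF hDN hκ (pre := []) (by simp) hp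
    (map_mem_sup_gapSpace hF p.2) hL).symm

end CenteredWordsVanish

end MomentsFactor

lemma cumulantsFactor_iff {B M : Type*} [Ring B] [Algebra ℂ B] [Ring M] [Algebra ℂ M]
    {ι : B →ₐ[ℂ] M} {κ : MultiplicativeMap ι} {F : B →ₗ[ℂ] B} {N : Subalgebra ℂ M} :
    CumulantsFactor κ F N ↔
      ∀ (k : ℕ) (n : Fin (k + 1) → M), (∀ j, n j ∈ N) → ∀ b : Fin k → B,
        κ.toFun (((List.finRange k).map fun j => n j.castSucc * ι (b j)) ++ [n (Fin.last k)]) =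
          F (κ.toFun (((List.finRange k).map fun j => n j.castSucc * ι (F (b j))) ++
            [n (Fin.last k)])) := by
  refine ⟨fun h k n hn b => ?_, fun h L hL n hn => ?_⟩
  · have := h ((List.finRange k).map fun j => (n j.castSucc, b j))
      (List.forall_mem_map.2 fun j _ => hn _) (n (Fin.last k)) (hn _)
    simpa [condCumulant, pairCumulant, Function.comp_def] using this
  · have hmap (g : M × B → M) : (List.finRange L.length).map (fun j => g (L.get j)) = L.map g := by
      apply List.ext_getElem <;> simp
    have := h L.length (Fin.snoc (fun j => (L.get j).1) n)
      (Fin.lastCases (by simpa using hn) fun j => by simpa using hL _ (L.get_mem j))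
      fun j => (L.get j).2
    simp only [Fin.snoc_castSucc, Fin.snoc_last, hmap fun p => p.1 * ι p.2,
      hmap fun p => p.1 * ι (F p.2)] at this
    simpa [condCumulant, pairCumulant, Function.comp_def] using this

end OVFree

/-- Let `(M, E : M → B)` be a `B`-probability space (with `ι : B → M` the
inclusion of `B` as a unital subalgebra), `D ⊆ B` a unital subalgebra and `F : B → D` a
conditional expectation satisfying the faithfulness condition (`F(b₁ b₂) = 0` for all `b₂`
implies `b₁ = 0`).  Let `κ = {⋯}_E` be the `B`-valued cumulant map, and let `N ⊆ M` be a
subalgebra containing `D`.  Then `N` is free from `B` with amalgamation over `D` (with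
respect to `F∘E`) iff
`{n₁ b₁, n₂ b₂, …, n_{k−1} b_{k−1}, n_k}_E = F({n₁ F(b₁), …, n_{k−1} F(b_{k−1}), n_k}_E)`
for all `k ≥ 1`, all `n₁, …, n_k ∈ N` and all `b₁, …, b_{k−1} ∈ B`. -/
theorem subalgebra_free_iff_R_transform_factorization
    {B M : Type*} [Ring B] [Algebra ℂ B] [Ring M] [Algebra ℂ M]
    (ι : B →ₐ[ℂ] M) (hι : Function.Injective ι)
    (E : M →ₗ[ℂ] B) (hE : IsCondExp ι E)
    (D : Subalgebra ℂ B)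
    (F : B →ₗ[ℂ] B) (hFD : ∀ b, F b ∈ D) (hFid : ∀ d ∈ D, F d = d)
    (hFbimod : ∀ d ∈ D, ∀ d' ∈ D, ∀ b : B, F (d * b * d') = d * F b * d')
    (hFfaithful : ∀ b₁ : B, (∀ b₂ : B, F (b₁ * b₂) = 0) → b₁ = 0)
    (κ : MultiplicativeMap ι) (hκ : IsCumulantMap ι E κ)
    (N : Subalgebra ℂ M) (hDN : ∀ d ∈ D, ι d ∈ N) :
    FreeWithAmalgamation (fun m => F (E m)) N ι.range
      ↔ ∀ (k : ℕ) (nn : Fin (k + 1) → M), (∀ j, nn j ∈ N) → ∀ b : Fin k → B,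
          κ.toFun (((List.finRange k).map fun j => nn j.castSucc * ι (b j))
              ++ [nn (Fin.last k)])
            = F (κ.toFun (((List.finRange k).map fun j => nn j.castSucc * ι (F (b j)))
              ++ [nn (Fin.last k)])) := by
  have hF : IsCondExpOnto D F :=
    ⟨hFD, fun hd => hFid _ hd, fun hd hd' b => hFbimod _ hd _ hd' b⟩
  rw [← cumulantsFactor_iff]
  refine ⟨fun hfree => ?_, fun hfactor => ?_⟩
  · exact (hfree.centeredWordsVanish hE hF hFfaithful).cumulantsFactor hE hF hDN hκ
  · exact (hfactor.centeredWordsVanish hE hκ).freeWithAmalgamation hE
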